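/- arXiv:2109.07845 — 7 statements merged into one kernel-verified Lean document; each statement's English description precedes it below -/
import Mathlib

section
/- Let K be a field with algebraic closure K̄, let n ≥ 3, and let A be a commutative K-algebra of dimension n as a K-vector space which admits exactly n pairwise distinct K-algebra homomorphisms σ_1, …, σ_n : A → K̄. Let α_1, …, α_{n−1} ∈ A and set v_ℓ := (σ_ℓ(α_1), …, σ_ℓ(α_{n−1})) ∈ K̄^{n−1} for 1 ≤ ℓ ≤ n. Then the following are equivalent: (1) every n−1 of the vectors v_1, …, v_n are linearly independent over K̄ (i.e. the corresponding points of projective space P^{n−2} are n points in general position); (2) there exists a unit λ ∈ A^× such that λα_1, …, λα_{n−1} is a K-basis of the trace-zero subspace {a ∈ A : Tr_{A/K}(a) = 0}. Moreover, if λ, λ' ∈ A^× both satisfy (2), then λ' = μλ for some μ ∈ K^×. -/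
section helpers

variable {K : Type*} [Field K] {n : ℕ} {A : Type*} [CommRing A] [Algebra K A]
  [FiniteDimensional K A]

theorem aux_indep {σ : Fin n → (A →ₐ[K] AlgebraicClosure K)}
    (hσ : Function.Injective σ) (c : Fin n → AlgebraicClosure K)
    (h : ∀ a, ∑ l, c l * σ l a = 0) : ∀ l, c l = 0 := by
  have h1 := linearIndependent_monoidHom A (AlgebraicClosure K)
  have h2 : Function.Injective (fun l => ((σ l : A →* AlgebraicClosure K))) := by
    intro i j hij
    apply hσ
    ext a
    exact DFunLike.congr_fun hij a
  have h3 := h1.comp _ h2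
  rw [Fintype.linearIndependent_iff] at h3
  apply h3 c
  funext a
  simpa using h a

theorem aux_matrix (hdim : Module.finrank K A = n) {σ : Fin n → (A →ₐ[K] AlgebraicClosure K)}
    (hσ : Function.Injective σ) (b : Module.Basis (Fin n) K A) :
    IsUnit (Matrix.of fun l j => σ l (b j)) := by
  rw [← Matrix.linearIndependent_rows_iff_isUnit, Fintype.linearIndependent_iff]
  intro c hc
  apply aux_indep hσ
  have hb : ∀ j, ∑ l, c l * σ l (b j) = 0 := by
    intro j
    have := congrFun hc j
    simpa using this
  intro a
  rw [← b.sum_repr a]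
  simp only [map_sum, map_smul, Finset.mul_sum]
  rw [Finset.sum_comm]
  apply Finset.sum_eq_zero
  intro j _
  simp only [mul_smul_comm]
  rw [← Finset.smul_sum, hb, smul_zero]

theorem aux_inj (hdim : Module.finrank K A = n) {σ : Fin n → (A →ₐ[K] AlgebraicClosure K)}
    (hσ : Function.Injective σ) (a : A) (ha : ∀ l, σ l a = 0) : a = 0 := by
  let b : Module.Basis (Fin n) K A := Module.finBasisOfFinrankEq K A hdim
  have hM := aux_matrix hdim hσ b
  have h1 := Matrix.mulVec_injective_of_isUnit hM
  have h2 : (fun j => algebraMap K (AlgebraicClosure K) (b.repr a j)) = 0 := by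
    apply h1
    rw [Matrix.mulVec_zero]
    funext l
    have := ha l
    rw [← b.sum_repr a] at this
    simp only [map_sum, Algebra.smul_def, map_mul, AlgHom.commutes] at this
    simp only [Matrix.mulVec, dotProduct, Matrix.of_apply, Pi.zero_apply]
    rw [← this]
    exact Finset.sum_congr rfl fun _ _ => mul_comm _ _
  apply b.repr.injective
  ext j
  have := congrFun h2 j
  simpa using this

theorem aux_trace (hdim : Module.finrank K A = n) {σ : Fin n → (A →ₐ[K] AlgebraicClosure K)}
    (hσ : Function.Injective σ) (a : A) :
    algebraMap K (AlgebraicClosure K) (Algebra.trace K A a) = ∑ l, σ l a := by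
  let b : Module.Basis (Fin n) K A := Module.finBasisOfFinrankEq K A hdim
  have hM := aux_matrix hdim hσ b
  set M := (Matrix.of fun l j => σ l (b j)) with hMd
  set P := (Algebra.leftMulMatrix b a).map (algebraMap K (AlgebraicClosure K)) with hP
  have h1 : M * P = Matrix.diagonal (fun l => σ l a) * M := by
    ext l j
    rw [Matrix.diagonal_mul, Matrix.mul_apply]
    simp only [hMd, hP, Matrix.of_apply, Matrix.map_apply, Algebra.leftMulMatrix_eq_repr_mul]
    rw [← map_mul]
    conv_rhs => rw [← b.sum_repr (a * b j)]
    simp only [map_sum, Algebra.smul_def, map_mul, AlgHom.commutes]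
    exact Finset.sum_congr rfl fun _ _ => mul_comm _ _
  have hd : IsUnit M.det := (Matrix.isUnit_iff_isUnit_det _).1 hM
  have h2 : P = M⁻¹ * (Matrix.diagonal (fun l => σ l a) * M) := by
    rw [← h1, ← Matrix.mul_assoc, Matrix.nonsing_inv_mul _ hd, Matrix.one_mul]
  rw [Algebra.trace_eq_matrix_trace b]
  have h3 : algebraMap K (AlgebraicClosure K) (Algebra.leftMulMatrix b a).trace = P.trace := by
    simp [hP, Matrix.trace]
  rw [h3, h2, Matrix.trace_mul_comm, Matrix.mul_assoc, Matrix.mul_nonsing_inv _ hd,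
    Matrix.mul_one, Matrix.trace_diagonal]

theorem aux_unit (hdim : Module.finrank K A = n) {σ : Fin n → (A →ₐ[K] AlgebraicClosure K)}
    (hσ : Function.Injective σ) (a : A) (ha : ∀ l, σ l a ≠ 0) : IsUnit a := by
  have h1 : Function.Injective (LinearMap.mulLeft K a) := by
    rw [← LinearMap.ker_eq_bot, LinearMap.ker_eq_bot']
    intro x hx
    apply aux_inj hdim hσ
    intro l
    have := congrArg (σ l) hx
    simpa [ha l] using this
  obtain ⟨y, hy⟩ := LinearMap.surjective_of_injective h1 1
  exact IsUnit.of_mul_eq_one y hy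

theorem aux_trace_one (hn : 0 < n) (hdim : Module.finrank K A = n)
    {σ : Fin n → (A →ₐ[K] AlgebraicClosure K)}
    (hσ : Function.Injective σ) : ∃ a : A, Algebra.trace K A a = 1 := by
  have : ∃ a : A, Algebra.trace K A a ≠ 0 := by
    by_contra! h
    have := aux_indep hσ (fun _ => 1) (by
      intro a
      simp only [one_mul]
      rw [← aux_trace hdim hσ, h, map_zero]) ⟨0, hn⟩
    exact one_ne_zero this
  obtain ⟨a, ha⟩ := this
  exact ⟨(Algebra.trace K A a)⁻¹ • a, by simp [ha]⟩

/-- a functional `∑ d_l σ_l` vanishing on the trace-zero space has all `d_l` equal. -/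
theorem aux_const (hn : 0 < n) (hdim : Module.finrank K A = n)
    {σ : Fin n → (A →ₐ[K] AlgebraicClosure K)}
    (hσ : Function.Injective σ) (d : Fin n → AlgebraicClosure K)
    (a₀ : A) (ha₀ : Algebra.trace K A a₀ = 1)
    (h : ∀ a, Algebra.trace K A a = 0 → ∑ l, d l * σ l a = 0) :
    ∀ l, d l = ∑ m, d m * σ m a₀ := by
  intro l
  rw [← sub_eq_zero]
  apply aux_indep hσ (fun l => d l - ∑ m, d m * σ m a₀)
  intro a
  have h1 := h (a - Algebra.trace K A a • a₀) (by simp [ha₀])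
  simp only [map_sub, Algebra.smul_def, map_mul, AlgHom.commutes, mul_sub, Finset.sum_sub_distrib] at h1
  simp only [sub_mul, Finset.sum_sub_distrib]
  rw [← Finset.mul_sum, ← aux_trace hdim hσ, ← h1, Finset.sum_mul]
  congr 1
  exact Finset.sum_congr rfl fun _ _ => by ring

end helpers


/-- For an `n`-dimensional commutative `K`-algebra `A` with exactly `n` distinct
`K`-algebra homomorphisms `σ_ℓ : A → K̄`, and `α_1, …, α_{n−1} ∈ A`, the vectors
`v_ℓ = (σ_ℓ(α_1), …, σ_ℓ(α_{n−1}))` have every `n−1` of them linearly independent over `K̄`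
iff there is a unit `λ ∈ A^×` with `λα_1, …, λα_{n−1}` a `K`-basis of the trace-zero subspace;
moreover such `λ` is unique up to `K^×`. -/
theorem stmt2 (K : Type*) [Field K] (n : ℕ) (hn : 3 ≤ n)
    (A : Type*) [CommRing A] [Algebra K A] [FiniteDimensional K A]
    (hdim : Module.finrank K A = n)
    (σ : Fin n → (A →ₐ[K] AlgebraicClosure K))
    (hσinj : Function.Injective σ)
    (hσall : ∀ f : A →ₐ[K] AlgebraicClosure K, ∃ ℓ, f = σ ℓ)
    (α : Fin (n - 1) → A) :
    ((∀ ℓ₀ : Fin n,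
        LinearIndependent (AlgebraicClosure K)
          (fun ℓ : {ℓ : Fin n // ℓ ≠ ℓ₀} => fun i : Fin (n - 1) => σ ℓ.1 (α i)))
      ↔ (∃ lam : Aˣ,
          LinearIndependent K (fun i : Fin (n - 1) => (lam : A) * α i)
            ∧ Submodule.span K (Set.range (fun i : Fin (n - 1) => (lam : A) * α i))
                = LinearMap.ker (Algebra.trace K A)))
    ∧ (∀ lam lam' : Aˣ,
        (LinearIndependent K (fun i : Fin (n - 1) => (lam : A) * α i)
          ∧ Submodule.span K (Set.range (fun i : Fin (n - 1) => (lam : A) * α i))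
              = LinearMap.ker (Algebra.trace K A)) →
        (LinearIndependent K (fun i : Fin (n - 1) => (lam' : A) * α i)
          ∧ Submodule.span K (Set.range (fun i : Fin (n - 1) => (lam' : A) * α i))
              = LinearMap.ker (Algebra.trace K A)) →
        ∃ μ : Kˣ, (lam' : A) = algebraMap K A (μ : K) * (lam : A)) := by
  have hn0 : 0 < n := by omega
  obtain ⟨a₀, ha₀⟩ := aux_trace_one hn0 hdim hσinj
  have hspan : ∀ lam : Aˣ, Submodule.span K (Set.range (fun i : Fin (n - 1) => (lam : A) * α i))
      = (Submodule.span K (Set.range α)).map (LinearMap.mulLeft K (lam : A)) := by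
    intro lam
    rw [Submodule.map_span, ← Set.range_comp]
    rfl
  refine ⟨⟨?_, ?_⟩, ?_⟩
  · intro h
    let T : A →ₗ[K] (Fin (n - 1) → K) :=
      LinearMap.pi fun i => (Algebra.trace K A).comp (LinearMap.mulRight K (α i))
    have hT : LinearMap.ker T ≠ ⊥ := by
      apply LinearMap.ker_ne_bot_of_finrank_lt
      rw [hdim, Module.finrank_fin_fun]
      omega
    obtain ⟨lam, hlam, hlam0⟩ := Submodule.exists_mem_ne_zero_of_ne_bot hT
    have htr : ∀ i, Algebra.trace K A (lam * α i) = 0 := by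
      intro i
      exact congrFun hlam i
    have hne : ∀ l, σ l lam ≠ 0 := by
      intro l₀ hl₀
      apply hlam0
      apply aux_inj hdim hσinj
      have h1 := Fintype.linearIndependent_iff.1 (h l₀) (fun l => σ l.1 lam) (by
        funext i
        have h2 := aux_trace hdim hσinj (lam * α i)
        rw [htr, map_zero] at h2
        rw [Finset.sum_apply]
        simp only [Pi.smul_apply, smul_eq_mul, Pi.zero_apply]
        rw [h2, ← Fintype.sum_subtype_add_sum_subtype (fun l => l ≠ l₀)]
        simp only [map_mul]
        rw [left_eq_add]
        apply Finset.sum_eq_zero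
        rintro ⟨x, hx⟩ _
        simp only [not_not] at hx
        simp [hx, hl₀])
      intro l
      by_cases hl : l = l₀
      · rw [hl, hl₀]
      · exact h1 ⟨l, hl⟩
    obtain ⟨u, hu⟩ := aux_unit hdim hσinj lam hne
    have hli : LinearIndependent K (fun i : Fin (n - 1) => (u : A) * α i) := by
      rw [Fintype.linearIndependent_iff]
      intro k hk
      have hk' : ∑ i, k i • α i = 0 := by
        have : (u : A) * ∑ i, k i • α i = 0 := by
          rw [← hk, Finset.mul_sum]
          exact Finset.sum_congr rfl fun _ _ => mul_smul_comm _ _ _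
        simpa using this
      have htop := (h ⟨0, hn0⟩).span_eq_top_of_card_eq_finrank' (by
        rw [Module.finrank_fin_fun]
        simp)
      let F : (Fin (n - 1) → AlgebraicClosure K) →ₗ[AlgebraicClosure K] AlgebraicClosure K :=
        ∑ i, algebraMap K (AlgebraicClosure K) (k i) • LinearMap.proj i
      have hF : F = 0 := by
        apply LinearMap.ext_on_range htop
        rintro ⟨l, hl⟩
        have := congrArg (σ l) hk'
        simpa [F, Algebra.smul_def] using this
      intro i
      have := congrArg (fun f => f (Pi.single i 1)) hF
      simpa [F, Pi.single_apply] using this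
    refine ⟨u, hli, ?_⟩
    apply Submodule.eq_of_le_of_finrank_eq
    · rw [Submodule.span_le]
      rintro _ ⟨i, rfl⟩
      simp only [SetLike.mem_coe, LinearMap.mem_ker]
      rw [hu]
      exact htr i
    · rw [finrank_span_eq_card hli, Fintype.card_fin]
      have h1 := LinearMap.finrank_range_add_finrank_ker (Algebra.trace K A)
      have h2 : LinearMap.range (Algebra.trace K A) = ⊤ := by
        rw [LinearMap.range_eq_top]
        intro x
        exact ⟨x • a₀, by simp [ha₀]⟩
      rw [h2, finrank_top, Module.finrank_self, hdim] at h1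
      omega
  · rintro ⟨lam, hli, hsp⟩ l₀
    have hlne : ∀ l, σ l (lam : A) ≠ 0 := fun l => (lam.isUnit.map (σ l)).ne_zero
    rw [Fintype.linearIndependent_iff]
    intro c hc
    let d : Fin n → AlgebraicClosure K := fun l =>
      if hl : l ≠ l₀ then c ⟨l, hl⟩ / σ l (lam : A) else 0
    let F : A →ₗ[K] AlgebraicClosure K := ∑ l, d l • (σ l).toLinearMap
    have hFa : ∀ a, F a = ∑ l, d l * σ l a := by
      intro a
      simp [F]
    have hFk : LinearMap.ker (Algebra.trace K A) ≤ LinearMap.ker F := by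
      rw [← hsp, Submodule.span_le]
      rintro _ ⟨i, rfl⟩
      simp only [SetLike.mem_coe, LinearMap.mem_ker]
      rw [hFa]
      have h1 := congrFun hc i
      rw [Finset.sum_apply] at h1
      simp only [Pi.smul_apply, smul_eq_mul, Pi.zero_apply] at h1
      rw [← Fintype.sum_subtype_add_sum_subtype (fun l => l ≠ l₀), ← h1]
      rw [add_eq_left.2]
      · apply Finset.sum_congr rfl
        rintro ⟨l, hl⟩ _
        have := hlne l
        simp only [d, dif_pos hl, map_mul]
        field_simp
      · apply Finset.sum_eq_zero
        rintro ⟨x, hx⟩ _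
        simp only [d, dif_neg hx, zero_mul]
    have hcst := aux_const hn0 hdim hσinj d a₀ ha₀ (fun a ha => by
      rw [← hFa]; exact hFk ha)
    have hd0 : d l₀ = 0 := by simp [d]
    rintro ⟨l, hl⟩
    have h1 : d l = 0 := by rw [hcst l, ← hcst l₀, hd0]
    simp only [d, dif_pos hl] at h1
    exact (div_eq_zero_iff.1 h1).resolve_right (hlne l)
  · rintro lam lam' ⟨-, h1⟩ ⟨-, h2⟩
    rw [hspan] at h1 h2
    have hk : ∀ a, Algebra.trace K A a = 0 →
        Algebra.trace K A (((lam' * lam⁻¹ : Aˣ) : A) * a) = 0 := by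
      intro a ha
      have : a ∈ LinearMap.ker (Algebra.trace K A) := ha
      rw [← h1] at this
      obtain ⟨x, hx, rfl⟩ := this
      rw [← LinearMap.mem_ker, ← h2]
      exact ⟨x, hx, by simp [mul_assoc]⟩
    set u : Aˣ := lam' * lam⁻¹ with hu
    have hcst := aux_const hn0 hdim hσinj (fun l => σ l (u : A)) a₀ ha₀ (fun a ha => by
      have := aux_trace hdim hσinj ((u : A) * a)
      rw [hk a ha, map_zero] at this
      simp only [map_mul] at this
      exact this.symm)
    have ht : ∑ m, σ m (u : A) * σ m a₀ =
        algebraMap K (AlgebraicClosure K) (Algebra.trace K A ((u : A) * a₀)) := by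
      rw [aux_trace hdim hσinj]
      simp only [map_mul]
    set t := Algebra.trace K A ((u : A) * a₀) with htd
    have hut : (u : A) = algebraMap K A t := by
      rw [← sub_eq_zero]
      apply aux_inj hdim hσinj
      intro l
      rw [map_sub, AlgHom.commutes, ← ht, sub_eq_zero]
      exact hcst l
    have ht0 : t ≠ 0 := by
      intro h0
      have h3 := (u.isUnit.map (σ ⟨0, hn0⟩)).ne_zero
      apply h3
      rw [hut, h0, map_zero, map_zero]
    refine ⟨Units.mk0 t ht0, ?_⟩
    rw [Units.val_mk0, ← hut, hu]
    simp
end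

section
/- Let K be an infinite field, let n ≥ 4, and let R = K[x_1,…,x_{n−1}]. Let I ⊆ R be the ideal generated by the quadratic forms x_i·(x_j − x_k) for all pairwise distinct i, j, k ∈ {1,…,n−1}. Then for f ∈ R we have f ∈ I if and only if f vanishes on the affine cone over the standard n points, i.e. f(t·e_ℓ) = 0 for all t ∈ K and 1 ≤ ℓ ≤ n−1, and f(t, t, …, t) = 0 for all t ∈ K, where e_ℓ ∈ K^{n−1} is the ℓ-th standard basis vector. -/
open MvPolynomial

lemma aux_q {m : ℕ} {A : Type*} [CommRing A] (x : Fin m → A)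
    (h : ∀ i j k, i ≠ j → j ≠ k → i ≠ k → x i * x j = x i * x k)
    (a b : Fin m) (hab : a ≠ b) (i j : Fin m) (hij : i ≠ j) : x i * x j = x a * x b := by
  have h' : ∀ i j k, i ≠ j → i ≠ k → x i * x j = x i * x k := by
    intro i j k h1 h2
    by_cases h3 : j = k
    · rw [h3]
    · exact h i j k h1 h3 h2
  by_cases hia : i = a
  · subst hia; exact h' _ _ _ hij hab
  · rw [h' i j a hij hia, mul_comm, h' a i b (Ne.symm hia) hab]

lemma aux_qx {m : ℕ} (hm : 3 ≤ m) {A : Type*} [CommRing A] (x : Fin m → A)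
    (h : ∀ i j k, i ≠ j → j ≠ k → i ≠ k → x i * x j = x i * x k)
    (a b : Fin m) (hab : a ≠ b) (j : Fin m) : x a * x b * x j = x a * x b * x a := by
  by_cases hj : j = a
  · rw [hj]
  · obtain ⟨k, hk⟩ : ∃ k, k ∉ ({a, j} : Finset (Fin m)) := by
      by_contra! hc
      have h1 : (Finset.univ : Finset (Fin m)) ⊆ {a, j} := fun k _ => hc k
      have h2 := Finset.card_le_card h1
      have h3 := Finset.card_le_two (a := a) (b := j)
      simp at h2
      omega
    simp only [Finset.mem_insert, Finset.mem_singleton, not_or] at hk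
    have e1 := aux_q x h a b hab a k (Ne.symm hk.1)
    have e2 := aux_q x h a b hab j k (Ne.symm hk.2)
    calc x a * x b * x j = x a * x k * x j := by rw [e1]
      _ = x j * x k * x a := by ring
      _ = _ := by rw [e2]

lemma aux_qpow {m : ℕ} (hm : 3 ≤ m) {A : Type*} [CommRing A] (x : Fin m → A)
    (h : ∀ i j k, i ≠ j → j ≠ k → i ≠ k → x i * x j = x i * x k)
    (a b : Fin m) (hab : a ≠ b) (j : Fin m) (d : ℕ) :
    x a * x b * x j ^ d = x a * x b * x a ^ d := by
  induction d with
  | zero => simp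
  | succ d ih =>
    rw [pow_succ, ← mul_assoc, ih, mul_right_comm, aux_qx hm x h a b hab]; ring

lemma aux_mon {m : ℕ} (hm : 3 ≤ m) {K A : Type*} [Field K] [CommRing A] [Algebra K A]
    (x : Fin m → A)
    (h : ∀ i j k, i ≠ j → j ≠ k → i ≠ k → x i * x j = x i * x k)
    (a b : Fin m) (hab : a ≠ b) (f : MvPolynomial (Fin m) K) :
    ∃ (p : Fin m → Polynomial K) (g : Polynomial K),
      aeval x f = ∑ i, Polynomial.aeval (x i) (p i)
        + x a * x b * Polynomial.aeval (x a) g := by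
  have hmon : ∀ s : Fin m →₀ ℕ, (∃ i d, aeval x (monomial s (1 : K)) = x i ^ d) ∨
      ∃ d, aeval x (monomial s (1 : K)) = x a * x b * x a ^ d := by
    intro s
    have key : ∀ l : List (Fin m), (∃ i d, (l.map x).prod = x i ^ d) ∨
      ∃ d, (l.map x).prod = x a * x b * x a ^ d := by
      intro l
      induction l with
      | nil => exact Or.inl ⟨a, 0, by simp⟩
      | cons j l ih =>
        rw [List.map_cons, List.prod_cons]
        rcases ih with ⟨i, d, e⟩ | ⟨d, e⟩
        · rw [e]
          rcases d with _ | d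
          · exact Or.inl ⟨j, 1, by simp⟩
          · by_cases hij : j = i
            · subst hij
              exact Or.inl ⟨j, d + 2, by ring⟩
            · refine Or.inr ⟨d, ?_⟩
              rw [← aux_qpow hm x h a b hab i d, ← aux_q x h a b hab j i hij]; ring
        · refine Or.inr ⟨d + 1, ?_⟩
          rw [e]
          have := aux_qx hm x h a b hab j
          linear_combination x a ^ d * this
    have := key s.toMultiset.toList
    have e : aeval x (monomial s (1 : K)) = (s.toMultiset.toList.map x).prod := by
      rw [aeval_monomial, map_one, one_mul, ← Multiset.prod_coe, ← Multiset.map_coe,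
        Multiset.coe_toList, Finsupp.toMultiset_map, Finsupp.prod_toMultiset,
        Finsupp.prod_mapDomain_index (fun _ => pow_zero _) (fun _ _ _ => pow_add _ _ _)]
    rw [e]; exact this
  induction f using MvPolynomial.induction_on' with
  | monomial s c =>
    have e0 : aeval x (monomial s c) = algebraMap K A c * aeval x (monomial s (1 : K)) := by
      simp [aeval_monomial]
    rcases hmon s with ⟨i, d, e⟩ | ⟨d, e⟩
    · refine ⟨Pi.single i (Polynomial.monomial d c), 0, ?_⟩
      rw [e0, e, Finset.sum_eq_single i]
      · simp [Polynomial.aeval_monomial]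
      · intro j _ hj; simp [Pi.single_eq_of_ne hj]
      · simp
    · refine ⟨0, Polynomial.monomial d c, ?_⟩
      rw [e0, e]
      simp [Polynomial.aeval_monomial]; ring
  | add f g hf hg =>
    obtain ⟨p, u, e⟩ := hf
    obtain ⟨q, v, e'⟩ := hg
    refine ⟨p + q, u + v, ?_⟩
    simp only [map_add, e, e', Pi.add_apply, Finset.sum_add_distrib]
    ring

theorem stmt5 (K : Type*) [Field K] [Infinite K] (n : ℕ) (hn : 4 ≤ n)
    (I : Ideal (MvPolynomial (Fin (n - 1)) K))
    (hI : I = Ideal.span {p : MvPolynomial (Fin (n - 1)) K |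
      ∃ i j k : Fin (n - 1), i ≠ j ∧ j ≠ k ∧ i ≠ k ∧ p = X i * (X j - X k)})
    (f : MvPolynomial (Fin (n - 1)) K) :
    f ∈ I ↔
      ((∀ (t : K) (ℓ : Fin (n - 1)),
          eval (fun s : Fin (n - 1) => if s = ℓ then t else 0) f = 0)
        ∧ ∀ t : K, eval (fun _ : Fin (n - 1) => t) f = 0) := by
  have fwd : ∀ f ∈ I, ((∀ (t : K) (ℓ : Fin (n - 1)),
          eval (fun s : Fin (n - 1) => if s = ℓ then t else 0) f = 0)
        ∧ ∀ t : K, eval (fun _ : Fin (n - 1) => t) f = 0) := by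
    intro f hf
    have gen : ∀ v : Fin (n - 1) → K, (∀ i j k, i ≠ j → j ≠ k → i ≠ k →
        v i * (v j - v k) = 0) → eval v f = 0 := by
      intro v hv
      have : I ≤ RingHom.ker (eval v) := by
        rw [hI, Ideal.span_le]
        rintro p ⟨i, j, k, h1, h2, h3, rfl⟩
        simpa [RingHom.mem_ker] using hv i j k h1 h2 h3
      exact this hf
    refine ⟨fun t l => gen _ ?_, fun t => gen _ ?_⟩
    · intro i j k h1 h2 h3
      by_cases hi : i = l
      · subst hi; simp [Ne.symm h1, Ne.symm h3]
      · simp [hi]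
    · intros; simp
  refine ⟨fwd f, fun ⟨hl, hd⟩ => ?_⟩
  have hm : 3 ≤ n - 1 := by omega
  let a : Fin (n - 1) := ⟨0, by omega⟩
  let b : Fin (n - 1) := ⟨1, by omega⟩
  have hab : a ≠ b := by simp [a, b]
  let x : Fin (n - 1) → (MvPolynomial (Fin (n - 1)) K ⧸ I) := fun i => Ideal.Quotient.mkₐ K I (X i)
  have hx : ∀ i j k, i ≠ j → j ≠ k → i ≠ k → x i * x j = x i * x k := by
    intro i j k h1 h2 h3
    have : (X i * X j - X i * X k : MvPolynomial (Fin (n - 1)) K) ∈ I := by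
      rw [hI, ← mul_sub]
      exact Ideal.subset_span ⟨i, j, k, h1, h2, h3, rfl⟩
    have := Ideal.Quotient.eq.2 this
    simpa [x] using this
  obtain ⟨p, g, e⟩ := aux_mon hm x hx a b hab f
  set F : MvPolynomial (Fin (n - 1)) K := ∑ i, Polynomial.aeval (X i) (p i)
        + X a * X b * Polynomial.aeval (X a) g with hF
  have hfF : f - F ∈ I := by
    apply Ideal.Quotient.eq.1
    have e1 : aeval x f = Ideal.Quotient.mkₐ K I f := by
      have : aeval x = Ideal.Quotient.mkₐ K I := by
        ext i; simp [x]
      rw [this]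
    have e2 : Ideal.Quotient.mkₐ K I F = ∑ i, Polynomial.aeval (x i) (p i)
        + x a * x b * Polynomial.aeval (x a) g := by
      rw [hF, map_add, map_sum, map_mul, map_mul]
      simp only [← Polynomial.aeval_algHom_apply, x]
    exact e1.symm.trans (e.trans e2.symm)
  obtain ⟨gl, gd⟩ := fwd _ hfF
  have evF : ∀ v : Fin (n - 1) → K, eval v F = ∑ i, (p i).eval (v i)
      + v a * v b * g.eval (v a) := by
    intro v
    have ha : ∀ (i) (q : Polynomial K), eval v (Polynomial.aeval (X i) q) = q.eval (v i) := by
      intro i q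
      have h1 := Polynomial.aeval_algHom_apply (aeval v : MvPolynomial (Fin (n - 1)) K →ₐ[K] K)
        (X i) q
      rw [aeval_X, Polynomial.coe_aeval_eq_eval] at h1
      exact h1.symm
    simp [hF, ha]
  have c0 : ∀ l, p l = Polynomial.C ((p l).eval 0) := by
    intro l
    have hc : ∀ t, (p l).eval t + ∑ i ∈ Finset.univ.erase l, (p i).eval 0 = 0 := by
      intro t
      have h1 := gl t l
      rw [map_sub, hl, zero_sub, neg_eq_zero, evF,
        ← Finset.add_sum_erase _ _ (Finset.mem_univ l)] at h1
      have h2 : (if a = l then t else 0) * (if b = l then t else 0) = 0 := by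
        by_cases h : a = l
        · have : b ≠ l := fun h' => hab (h.trans h'.symm)
          simp [this]
        · simp [h]
      rw [h2, zero_mul, add_zero] at h1
      refine Eq.trans ?_ h1
      congr 1
      · simp
      · apply Finset.sum_congr rfl
        intro i hi
        simp [Finset.ne_of_mem_erase hi]
    apply Polynomial.funext
    intro t
    rw [Polynomial.eval_C]
    exact add_right_cancel ((hc t).trans (hc 0).symm)
  have s0 : ∑ i, (p i).eval 0 = 0 := by
    have h1 := gd 0
    rw [map_sub, hd, zero_sub, neg_eq_zero, evF] at h1
    simpa using h1
  have g0 : Polynomial.X * Polynomial.X * g = 0 := by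
    apply Polynomial.funext
    intro t
    have h1 := gd t
    rw [map_sub, hd, zero_sub, neg_eq_zero, evF] at h1
    have h2 : ∑ i, (p i).eval t = 0 := by
      rw [← s0]
      apply Finset.sum_congr rfl
      intro i _
      rw [c0 i]; simp
    rw [h2, zero_add] at h1
    simpa using h1
  have g0' : g = 0 := by simpa using g0
  have F0 : F = 0 := by
    have : ∀ i, Polynomial.aeval (X i : MvPolynomial (Fin (n - 1)) K) (p i)
        = C ((p i).eval 0) := by
      intro i
      conv_lhs => rw [c0 i]
      simp [MvPolynomial.algebraMap_eq]
    rw [hF, g0']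
    simp only [this, ← map_sum, s0]
    simp
  simpa [F0] using hfF
end

section
/- With the bracket setup below, for every 2 ≤ r ≤ m−2 and all indices a_1, …, a_m ∈ {1,…,n−1} we have [a_1,…,a_{r−1},a_r,a_{r+1},a_{r+2},…,a_m] = −[a_1,…,a_{r−1},a_{r+1},a_r,a_{r+2},…,a_m]; that is, swapping two adjacent indices in positions r and r+1 (with 2 ≤ r ≤ m−2) changes the sign of the bracket. -/
open MvPolynomial

/-- The row vector `(∂φ_1/∂x_{a_1})(∂φ_2/∂x_{a_2})⋯(∂φ_r/∂x_{a_r})` (0-based: the sequence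
`a` and the matrices `φ` are indexed from 0). -/
noncomputable def brkVec {K : Type*} [Field K] {N : ℕ} {b : ℕ → ℕ}
    (φ : ∀ r : ℕ, Matrix (Fin (b r)) (Fin (b (r + 1))) (MvPolynomial (Fin N) K))
    (a : ℕ → Fin N) : ∀ r : ℕ, Fin (b r) → MvPolynomial (Fin N) K
  | 0 => fun _ => 1
  | (r + 1) => Matrix.vecMul (brkVec φ a r) (fun p q => pderiv (a r) (φ r p q))

/-- The bracket `[a_1, …, a_m] = (∂φ_1/∂x_{a_1})⋯(∂φ_m/∂x_{a_m})`, a `1 × 1` matrix (since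
`b m = 1`) identified with a polynomial via the sum of its entries. -/
noncomputable def brk {K : Type*} [Field K] {N : ℕ} {b : ℕ → ℕ}
    (φ : ∀ r : ℕ, Matrix (Fin (b r)) (Fin (b (r + 1))) (MvPolynomial (Fin N) K))
    (m : ℕ) (a : ℕ → Fin N) : MvPolynomial (Fin N) K :=
  ∑ j : Fin (b m), brkVec φ a m j

theorem pderiv_pderiv_of_linear {K : Type*} [Field K] {N : ℕ} (f : MvPolynomial (Fin N) K)
    (hf : f.IsHomogeneous 1) (i j : Fin N) : pderiv i (pderiv j f) = 0 := by
  have h : (pderiv j f).IsHomogeneous 0 := hf.pderiv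
  have h2 := totalDegree_eq_zero_iff_eq_C.mp (Nat.le_zero.mp h.totalDegree_le)
  rw [h2, pderiv_C]

theorem swap_aux {K : Type*} [Field K] {N u v w : ℕ}
    (A : Matrix (Fin u) (Fin v) (MvPolynomial (Fin N) K))
    (B : Matrix (Fin v) (Fin w) (MvPolynomial (Fin N) K))
    (hAB : A * B = 0) (hA : ∀ p q, (A p q).IsHomogeneous 1)
    (hB : ∀ p q, (B p q).IsHomogeneous 1) (i j : Fin N) :
    A.map (pderiv i) * B.map (pderiv j) = - (A.map (pderiv j) * B.map (pderiv i)) := by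
  ext1 p q
  have h : pderiv i (pderiv j ((A * B) p q)) = 0 := by rw [hAB]; simp
  rw [Matrix.mul_apply, map_sum, map_sum] at h
  rw [Matrix.neg_apply, eq_neg_iff_add_eq_zero, Matrix.mul_apply, Matrix.mul_apply,
    ← Finset.sum_add_distrib, ← h]
  refine Finset.sum_congr rfl fun k _ => ?_
  simp only [Matrix.map_apply, Derivation.leibniz, map_add, smul_eq_mul,
    pderiv_pderiv_of_linear _ (hA _ _), pderiv_pderiv_of_linear _ (hB _ _)]
  ring

/-- In the bracket setup (matrices `φ_1, …, φ_m` with `φ_r φ_{r+1} = 0`,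
quadratic entries at the two ends and linear entries in the middle), swapping two adjacent
indices in (1-based) positions `r, r+1` with `2 ≤ r ≤ m−2` changes the sign of the bracket.
Here positions are 0-based: `p = r − 1`, so `1 ≤ p` and `p + 3 ≤ m`. -/
theorem stmt6 (K : Type*) [Field K] (n : ℕ) (hn : 4 ≤ n) (m : ℕ) (hm : m = n - 2)
    (b : ℕ → ℕ) (hbpos : ∀ r, r ≤ m → 0 < b r) (hb0 : b 0 = 1) (hbm : b m = 1)
    (φ : ∀ r : ℕ, Matrix (Fin (b r)) (Fin (b (r + 1))) (MvPolynomial (Fin (n - 1)) K))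
    (hcomp : ∀ r, r + 2 ≤ m → φ r * φ (r + 1) = 0)
    (hdeg1 : ∀ p q, (φ 0 p q).IsHomogeneous 2)
    (hdegm : ∀ p q, (φ (m - 1) p q).IsHomogeneous 2)
    (hdegmid : ∀ r, 1 ≤ r → r + 2 ≤ m → ∀ p q, (φ r p q).IsHomogeneous 1)
    (a : ℕ → Fin (n - 1)) (p : ℕ) (hp1 : 1 ≤ p) (hp2 : p + 3 ≤ m) :
    brk φ m (fun s => if s = p then a (p + 1) else if s = p + 1 then a p else a s)
      = - brk φ m a := by
  set a₂ : ℕ → Fin (n - 1) :=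
    fun s => if s = p then a (p + 1) else if s = p + 1 then a p else a s with ha₂
  have h1 : ∀ r, r ≤ p → brkVec φ a₂ r = brkVec φ a r := by
    intro r
    induction r with
    | zero => intro _; rfl
    | succ r ih =>
      intro hr
      have e : a₂ r = a r := by
        simp only [ha₂]
        rw [if_neg (by omega), if_neg (by omega)]
      simp only [brkVec]
      rw [ih (by omega), e]
  have h2 : brkVec φ a₂ (p + 2) = - brkVec φ a (p + 2) := by
    have e1 : a₂ p = a (p + 1) := by simp [ha₂]
    have e2 : a₂ (p + 1) = a p := by simp [ha₂]
    have key := swap_aux (φ p) (φ (p + 1)) (hcomp p (by omega))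
      (hdegmid p hp1 (by omega)) (hdegmid (p + 1) (by omega) (by omega)) (a (p + 1)) (a p)
    have hv : ∀ c : ℕ → Fin (n - 1), brkVec φ c (p + 2) = Matrix.vecMul (brkVec φ c p)
        ((φ p).map (pderiv (c p)) * (φ (p + 1)).map (pderiv (c (p + 1)))) := by
      intro c
      rw [← Matrix.vecMul_vecMul]
      rfl
    rw [hv, hv, e1, e2, key, h1 p le_rfl, Matrix.vecMul_neg]
  have h3 : ∀ k, brkVec φ a₂ (p + 2 + k) = - brkVec φ a (p + 2 + k) := by
    intro k
    induction k with
    | zero => exact h2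
    | succ k ih =>
      have e : a₂ (p + 2 + k) = a (p + 2 + k) := by
        simp only [ha₂]
        rw [if_neg (by omega), if_neg (by omega)]
      rw [← add_assoc]
      simp only [brkVec]
      rw [ih, e]
      exact Matrix.neg_vecMul _ _
  obtain ⟨k, rfl⟩ : ∃ k, m = p + 2 + k := ⟨m - (p + 2), by omega⟩
  simp only [brk, h3, Pi.neg_apply, Finset.sum_neg_distrib]
end

section
/- With the bracket setup below and assuming additionally m ≥ 4 (i.e. n ≥ 6), for all a, b, c, d ∈ {1,…,n−1} and all a_2, …, a_{m−1} ∈ {1,…,n−1} we have [a,b,a_3,…,a_{m−2},c,d] + [b,a,a_3,…,a_{m−2},c,d] + [a,b,a_3,…,a_{m−2},d,c] + [b,a,a_3,…,a_{m−2},d,c] = 0, where the middle entries a_3,…,a_{m−2} are the same in all four brackets. -/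
open MvPolynomial

open Matrix in
theorem brkVec_succ' {K : Type*} [Field K] {N : ℕ} {b : ℕ → ℕ}
    (φ : ∀ r : ℕ, Matrix (Fin (b r)) (Fin (b (r + 1))) (MvPolynomial (Fin N) K))
    (a : ℕ → Fin N) (r : ℕ) :
    brkVec φ a (r + 1) = brkVec φ a r ᵥ* (φ r).map (pderiv (a r)) := rfl

theorem brkVec_congr' {K : Type*} [Field K] {N : ℕ} {b : ℕ → ℕ}
    (φ : ∀ r : ℕ, Matrix (Fin (b r)) (Fin (b (r + 1))) (MvPolynomial (Fin N) K))
    (a a' : ℕ → Fin N) (r : ℕ) (h : ∀ s, s < r → a s = a' s) :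
    brkVec φ a r = brkVec φ a' r := by
  induction r with
  | zero => rfl
  | succ r ih =>
    rw [brkVec_succ', brkVec_succ', ih (fun s hs => h s (by omega)), h r (by omega)]

/-- Leibniz rule for products of matrices. -/
theorem map_pderiv_mul' {K : Type*} [Field K] {N p q r : ℕ}
    (A : Matrix (Fin p) (Fin q) (MvPolynomial (Fin N) K))
    (B : Matrix (Fin q) (Fin r) (MvPolynomial (Fin N) K)) (i : Fin N) :
    (A * B).map (pderiv i) = A.map (pderiv i) * B + A * B.map (pderiv i) := by
  ext1 x y
  simp only [Matrix.map_apply, Matrix.add_apply, Matrix.mul_apply, map_sum, Derivation.leibniz,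
    smul_eq_mul, Finset.sum_add_distrib]
  rw [add_comm]
  congr 1
  exact Finset.sum_congr rfl fun _ _ => mul_comm _ _

theorem map_pderiv_two' {K : Type*} [Field K] {N p q r : ℕ}
    (A : Matrix (Fin p) (Fin q) (MvPolynomial (Fin N) K))
    (B : Matrix (Fin q) (Fin r) (MvPolynomial (Fin N) K)) (h : A * B = 0) (i j : Fin N) :
    A.map (pderiv i) * B.map (pderiv j) + A.map (pderiv j) * B.map (pderiv i) =
      - ((A.map (pderiv i)).map (pderiv j) * B + A * (B.map (pderiv i)).map (pderiv j)) := by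
  have h1 := map_pderiv_mul' A B i
  have h0 : ∀ (i : Fin N) , (0 : Matrix (Fin p) (Fin r) (MvPolynomial (Fin N) K)).map (pderiv i)
      = 0 := fun i => by ext1 x y; simp
  have h2 := congrArg (fun M => M.map (pderiv j)) h1
  simp only [h, h0] at h2
  rw [Matrix.map_add _ (fun _ _ => map_add _ _ _), map_pderiv_mul', map_pderiv_mul'] at h2
  rw [eq_neg_iff_add_eq_zero, h2]
  abel

theorem map_pderiv_linear' {K : Type*} [Field K] {N p q : ℕ}
    (A : Matrix (Fin p) (Fin q) (MvPolynomial (Fin N) K)) (h : ∀ x y, (A x y).IsHomogeneous 1)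
    (i j : Fin N) : (A.map (pderiv i)).map (pderiv j) = 0 := by
  ext1 x y
  have h1 : (pderiv i (A x y)).IsHomogeneous 0 := (h x y).pderiv
  have h2 := (totalDegree_eq_zero_iff_eq_C).1 (Nat.le_zero.1 h1.totalDegree_le)
  simp only [Matrix.map_apply, Matrix.zero_apply]
  rw [h2, pderiv_C]

open Matrix in
theorem core' {K : Type*} [Field K] {N k : ℕ} {b : ℕ → ℕ}
    (φ : ∀ r : ℕ, Matrix (Fin (b r)) (Fin (b (r + 1))) (MvPolynomial (Fin N) K))
    (hcomp : ∀ r, r + 2 ≤ k + 4 → φ r * φ (r + 1) = 0)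
    (hmid : ∀ r, 1 ≤ r → r + 2 ≤ k + 4 → ∀ p q, (φ r p q).IsHomogeneous 1)
    (a a1 a2 a3 : ℕ → Fin N)
    (h10 : a1 0 = a 1) (h11 : a1 1 = a 0) (h1 : ∀ s, 2 ≤ s → a1 s = a s)
    (h2 : ∀ s, s < k + 2 → a2 s = a s) (h22 : a2 (k + 2) = a (k + 3)) (h23 : a2 (k + 3) = a (k + 2))
    (h3 : ∀ s, s < k + 2 → a3 s = a1 s) (h32 : a3 (k + 2) = a (k + 3))
    (h33 : a3 (k + 3) = a (k + 2)) :
    brkVec φ a (k + 4) + brkVec φ a1 (k + 4) + brkVec φ a2 (k + 4) + brkVec φ a3 (k + 4) = 0 := by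
  have key : ∀ r, r ≤ k → ∃ u, brkVec φ a (r + 2) + brkVec φ a1 (r + 2) = u ᵥ* φ (r + 1) := by
    intro r
    induction r with
    | zero =>
      intro _
      refine ⟨- (brkVec φ a 0 ᵥ* ((φ 0).map (pderiv (a 0))).map (pderiv (a 1))), ?_⟩
      have e := map_pderiv_two' _ _ (hcomp 0 (by omega)) (a 0) (a 1)
      rw [map_pderiv_linear' (φ (0 + 1)) (hmid _ (by omega) (by omega)), Matrix.mul_zero,
        add_zero] at e
      have e0 : brkVec φ a1 0 = brkVec φ a 0 := rfl
      simp only [brkVec_succ', Matrix.vecMul_vecMul, h10, h11, e0]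
      rw [← Matrix.vecMul_add]
      erw [e]
      rw [Matrix.vecMul_neg, Matrix.neg_vecMul, Matrix.vecMul_vecMul]
    | succ r ih =>
      intro hr
      obtain ⟨u, hu⟩ := ih (by omega)
      refine ⟨- (u ᵥ* (φ (r + 1)).map (pderiv (a (r + 2)))), ?_⟩
      have e := map_pderiv_mul' (φ (r + 1)) (φ (r + 1 + 1)) (a (r + 2))
      rw [hcomp (r + 1) (by omega)] at e
      have e0 : (0 : Matrix (Fin (b (r + 1))) (Fin (b (r + 1 + 1 + 1)))
          (MvPolynomial (Fin N) K)).map (pderiv (a (r + 2))) = 0 := by ext1 x y; simp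
      rw [e0] at e
      have e' := eq_neg_of_add_eq_zero_right e.symm
      change brkVec φ a (r + 2 + 1) + brkVec φ a1 (r + 2 + 1) = _
      rw [brkVec_succ' φ a (r + 2), brkVec_succ' φ a1 (r + 2), h1 (r + 2) (by omega), ← Matrix.add_vecMul, hu,
        Matrix.vecMul_vecMul, Matrix.neg_vecMul, Matrix.vecMul_vecMul]
      erw [e']
      rw [Matrix.vecMul_neg]
  obtain ⟨u, hu⟩ := key k le_rfl
  have c2 := brkVec_congr' φ a2 a (k + 2) h2
  have c3 := brkVec_congr' φ a3 a1 (k + 2) h3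
  have e := map_pderiv_two' (φ (k + 2)) (φ (k + 3)) (hcomp (k + 2) (by omega))
    (a (k + 2)) (a (k + 3))
  rw [map_pderiv_linear' (φ (k + 2)) (hmid _ (by omega) (by omega)), Matrix.zero_mul,
    zero_add] at e
  have st : ∀ x : ℕ → Fin N, brkVec φ x (k + 4) = brkVec φ x (k + 2) ᵥ*
      ((φ (k + 2)).map (pderiv (x (k + 2))) * (φ (k + 3)).map (pderiv (x (k + 3)))) := by
    intro x
    rw [← Matrix.vecMul_vecMul]; rfl
  rw [st a, st a1, st a2, st a3, h1 _ (by omega), h1 _ (by omega), h22, h23, h32, h33, c2, c3,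
    ← Matrix.add_vecMul, hu, add_assoc, ← Matrix.add_vecMul, hu, ← Matrix.vecMul_add, e,
    Matrix.vecMul_neg, ← Matrix.vecMul_vecMul, Matrix.vecMul_vecMul u]
  have := hcomp (k + 1) (by omega)
  erw [this]
  simp

/-- In the bracket setup with `m ≥ 4` (i.e. `n ≥ 6`):
`[a,b,…,c,d] + [b,a,…,c,d] + [a,b,…,d,c] + [b,a,…,d,c] = 0`, where the middle entries
are the same in all four brackets. Here the sequence `a` is 0-based, so the swaps happen
at positions `0,1` and `m−2, m−1`. -/
theorem stmt7 (K : Type*) [Field K] (n : ℕ) (hn : 6 ≤ n) (m : ℕ) (hm : m = n - 2)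
    (b : ℕ → ℕ) (hbpos : ∀ r, r ≤ m → 0 < b r) (hb0 : b 0 = 1) (hbm : b m = 1)
    (φ : ∀ r : ℕ, Matrix (Fin (b r)) (Fin (b (r + 1))) (MvPolynomial (Fin (n - 1)) K))
    (hcomp : ∀ r, r + 2 ≤ m → φ r * φ (r + 1) = 0)
    (hdeg1 : ∀ p q, (φ 0 p q).IsHomogeneous 2)
    (hdegm : ∀ p q, (φ (m - 1) p q).IsHomogeneous 2)
    (hdegmid : ∀ r, 1 ≤ r → r + 2 ≤ m → ∀ p q, (φ r p q).IsHomogeneous 1)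
    (a : ℕ → Fin (n - 1)) :
    brk φ m a
      + brk φ m (fun s => if s = 0 then a 1 else if s = 1 then a 0 else a s)
      + brk φ m (fun s => if s = m - 2 then a (m - 1) else if s = m - 1 then a (m - 2) else a s)
      + brk φ m (fun s =>
          if s = 0 then a 1 else if s = 1 then a 0
          else if s = m - 2 then a (m - 1) else if s = m - 1 then a (m - 2) else a s)
      = 0 := by
  obtain ⟨k, rfl⟩ : ∃ k, m = k + 4 := ⟨m - 4, by omega⟩
  have hc := core' φ hcomp hdegmid a
    (fun s => if s = 0 then a 1 else if s = 1 then a 0 else a s)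
    (fun s => if s = k + 4 - 2 then a (k + 4 - 1) else if s = k + 4 - 1 then a (k + 4 - 2) else a s)
    (fun s =>
          if s = 0 then a 1 else if s = 1 then a 0
          else if s = k + 4 - 2 then a (k + 4 - 1)
          else if s = k + 4 - 1 then a (k + 4 - 2) else a s)
    (by simp) (by simp)
    (fun s hs => by
      have h0 : s ≠ 0 := by omega
      have h1 : s ≠ 1 := by omega
      simp [h0, h1])
    (fun s hs => by
      have h0 : s ≠ k + 4 - 2 := by omega
      have h1 : s ≠ k + 4 - 1 := by omega
      simp only [h0, h1, if_false])
    (by simp) (by simp)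
    (fun s hs => by
      have h0 : s ≠ k + 4 - 2 := by omega
      have h1 : s ≠ k + 4 - 1 := by omega
      simp only [h0, h1, if_false])
    (by simp) (by simp)
  unfold brk
  rw [← Finset.sum_add_distrib, ← Finset.sum_add_distrib, ← Finset.sum_add_distrib]
  exact Finset.sum_eq_zero fun j _ => congrFun hc j
end

section
/- With the bracket setup below, assume self-duality: b_r = b_{m−r} for all 0 ≤ r ≤ m, and there exist invertible matrices U_0, …, U_m with entries in K, with U_0 = (1) the 1×1 identity and U_m = (c) a 1×1 scalar matrix, such that U_{r−1}·φ_r = φ_{m+1−r}^T·U_r for all 1 ≤ r ≤ m. Then for all indices a_1, …, a_m ∈ {1,…,n−1} we have [a_1, a_2, …, a_m] = c·[a_m, a_{m−1}, …, a_1]. (For the minimal free resolution of a set of n points in general position such matrices exist with c = +1 if m ≡ 0,1 (mod 4) and c = −1 if m ≡ 2,3 (mod 4), by Gorenstein duality.) -/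
open MvPolynomial Matrix

/-- In the bracket setup, if the resolution is self-dual — `b_r = b_{m−r}` and
there are invertible scalar matrices `U_0 = 1, U_1, …, U_m = (c)` with
`U_{r−1}·φ_r = φ_{m+1−r}ᵀ·U_r` — then `[a_1, …, a_m] = c·[a_m, …, a_1]`. -/
theorem stmt8 (K : Type*) [Field K] (n : ℕ) (hn : 4 ≤ n) (m : ℕ) (hm : m = n - 2)
    (b : ℕ → ℕ) (hbpos : ∀ r, r ≤ m → 0 < b r) (hb0 : b 0 = 1) (hbm : b m = 1)
    (φ : ∀ r : ℕ, Matrix (Fin (b r)) (Fin (b (r + 1))) (MvPolynomial (Fin (n - 1)) K))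
    (hcomp : ∀ r, r + 2 ≤ m → φ r * φ (r + 1) = 0)
    (hdeg1 : ∀ p q, (φ 0 p q).IsHomogeneous 2)
    (hdegm : ∀ p q, (φ (m - 1) p q).IsHomogeneous 2)
    (hdegmid : ∀ r, 1 ≤ r → r + 2 ≤ m → ∀ p q, (φ r p q).IsHomogeneous 1)
    (hbsym : ∀ r, r ≤ m → b r = b (m - r))
    (U : ∀ r : ℕ, Matrix (Fin (b r)) (Fin (b r)) K)
    (hU : ∀ r, r ≤ m → IsUnit (U r))
    (hU0 : U 0 = 1)
    (cval : K)
    (hUm : U m = cval • (1 : Matrix (Fin (b m)) (Fin (b m)) K))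
    (hdual : ∀ s, s < m →
      ∀ (h3 : b (m - (s + 1) + 1) = b s) (h2 : b (m - (s + 1)) = b (s + 1)),
        (U s).map (fun x => (C x : MvPolynomial (Fin (n - 1)) K)) * φ s
          = (Matrix.transpose (φ (m - (s + 1)))).submatrix (Fin.cast h3.symm) (Fin.cast h2.symm)
              * (U (s + 1)).map (fun x => (C x : MvPolynomial (Fin (n - 1)) K)))
    (a : ℕ → Fin (n - 1)) :
    brk φ m a = C cval * brk φ m (fun r => a (m - 1 - r)) := by
  have key : ∀ r, r ≤ m → ∃ W : Fin (b r) → MvPolynomial (Fin (n - 1)) K,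
      brkVec φ a r = Matrix.vecMul W ((U r).map (fun x => (C x : MvPolynomial (Fin (n - 1)) K))) ∧
      ∀ k, r + k = m → ∀ h : b r = b k,
        ∑ j, W j * brkVec φ (fun r => a (m - 1 - r)) k (Fin.cast h j)
          = brk φ m (fun r => a (m - 1 - r)) := by
    intro r
    induction r with
    | zero =>
      intro _
      refine ⟨fun _ => 1, ?_, ?_⟩
      · rw [hU0, Matrix.map_one _ (map_zero C) (map_one C), Matrix.vecMul_one]
        rfl
      · intro k hk h
        obtain rfl : k = m := by omega
        simp only [one_mul, brk]
        exact (finCongr h).sum_comp (brkVec φ (fun r => a (k - 1 - r)) k)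
    | succ r ih =>
      intro hr
      obtain ⟨W, hW, hS⟩ := ih (by omega)
      have h2 : b (m - (r + 1)) = b (r + 1) := (hbsym (r + 1) hr).symm
      have h3 : b (m - (r + 1) + 1) = b r := by
        rw [hbsym r (by omega)]
        congr 1
        omega
      have hd := hdual r (by omega) h3 h2
      refine ⟨Matrix.vecMul W (Matrix.of fun p q =>
        pderiv (a r) (φ (m - (r + 1)) (Fin.cast h2.symm q) (Fin.cast h3.symm p))), ?_, ?_⟩
      · change Matrix.vecMul (brkVec φ a r) (Matrix.of fun p q => pderiv (a r) (φ r p q)) = _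
        rw [hW, Matrix.vecMul_vecMul, Matrix.vecMul_vecMul]
        congr 1
        ext1 p q
        have := congrArg (pderiv (a r)) (congrFun (congrFun hd p) q)
        simpa [Matrix.mul_apply, Derivation.leibniz, mul_comm] using this
      · intro k hk h
        obtain rfl : k = m - (r + 1) := by omega
        rw [← hS (m - (r + 1) + 1) (by omega) h3.symm]
        have ha : a (m - 1 - (m - (r + 1))) = a r := by
          congr 1
          omega
        simp only [brkVec, Matrix.vecMul, dotProduct, ha, Matrix.of_apply, Finset.sum_mul, Finset.mul_sum]
        rw [Finset.sum_comm]
        refine Finset.sum_congr rfl fun i _ => ?_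
        rw [← (finCongr h).sum_comp]
        refine Finset.sum_congr rfl fun j _ => ?_
        simp only [finCongr_apply]
        ring
  obtain ⟨W, hW, hS⟩ := key m le_rfl
  have h := hS 0 (by omega) (by rw [hbm, hb0])
  simp only [brkVec, mul_one] at h
  rw [← h, brk, hW, hUm, Finset.mul_sum]
  refine Finset.sum_congr rfl fun j _ => ?_
  simp [Matrix.vecMul, dotProduct, Matrix.one_apply, apply_ite C, mul_comm]
end

section
/- With the bracket setup below, assume additionally the reversal identity: [a_1,…,a_m] = ε·[a_m,…,a_1] for all a_1,…,a_m ∈ {1,…,n−1}, where ε = +1 if m ≡ 0,1 (mod 4) and ε = −1 if m ≡ 2,3 (mod 4). Let σ ∈ S_m be the m-cycle (1 2 ⋯ m) and define the double bracket [[a_1,…,a_m]] := Σ_{k=1}^{m} [a_{σ^{2k}(1)}, …, a_{σ^{2k}(m)}]. Then for every permutation τ ∈ S_m and all indices a_1,…,a_m ∈ {1,…,n−1} we have [[a_{τ(1)}, …, a_{τ(m)}]] = sign(τ)·[[a_1, …, a_m]]. -/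
open MvPolynomial

/-- The double bracket `[[a_1, …, a_m]] = Σ_{k=1}^{m} [a_{σ^{2k}(1)}, …, a_{σ^{2k}(m)}]`,
where `σ = (1 2 ⋯ m)`; in 0-based terms position `r` receives `a ((r + 2(k+1)) % m)`. -/
noncomputable def dbrk {K : Type*} [Field K] {N : ℕ} {b : ℕ → ℕ}
    (φ : ∀ r : ℕ, Matrix (Fin (b r)) (Fin (b (r + 1))) (MvPolynomial (Fin N) K))
    (m : ℕ) (a : ℕ → Fin N) : MvPolynomial (Fin N) K :=
  ∑ k ∈ Finset.range m, brk φ m (fun r => a ((r + 2 * (k + 1)) % m))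


/-- generic row vector product -/
noncomputable def gW {R : Type*} [CommRing R] {b : ℕ → ℕ}
    (D : ∀ r : ℕ, Matrix (Fin (b r)) (Fin (b (r + 1))) R) : ∀ r : ℕ, Fin (b r) → R
  | 0 => fun _ => 1
  | (r + 1) => Matrix.vecMul (gW D r) (D r)

/-- sum of entries of the generic product -/
noncomputable def gS {R : Type*} [CommRing R] {b : ℕ → ℕ}
    (D : ∀ r : ℕ, Matrix (Fin (b r)) (Fin (b (r + 1))) R) (m : ℕ) : R := ∑ j, gW D m j

/-- entrywise derivative -/
noncomputable def dM {K : Type*} [Field K] {N : ℕ} {p q : ℕ} (i : Fin N)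
    (A : Matrix (Fin p) (Fin q) (MvPolynomial (Fin N) K)) :
    Matrix (Fin p) (Fin q) (MvPolynomial (Fin N) K) := fun x y => pderiv i (A x y)

theorem gW_congr {R : Type*} [CommRing R] {b : ℕ → ℕ}
    {D D' : ∀ r : ℕ, Matrix (Fin (b r)) (Fin (b (r + 1))) R} (r : ℕ)
    (h : ∀ s, s < r → D s = D' s) : gW D r = gW D' r := by
  induction r with
  | zero => rfl
  | succ r ih =>
    simp only [gW]
    rw [ih (fun s hs => h s (by omega)), h r (by omega)]

theorem gS_congr {R : Type*} [CommRing R] {b : ℕ → ℕ}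
    {D D' : ∀ r : ℕ, Matrix (Fin (b r)) (Fin (b (r + 1))) R} (r : ℕ)
    (h : ∀ s, s < r → D s = D' s) : gS D r = gS D' r := by
  simp only [gS, gW_congr r h]

theorem brk_eq_gS {K : Type*} [Field K] {N : ℕ} {b : ℕ → ℕ}
    (φ : ∀ r : ℕ, Matrix (Fin (b r)) (Fin (b (r + 1))) (MvPolynomial (Fin N) K))
    (m : ℕ) (a : ℕ → Fin N) : brk φ m a = gS (fun r => dM (a r) (φ r)) m := by
  have : ∀ r, brkVec φ a r = gW (fun r => dM (a r) (φ r)) r := by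
    intro r
    induction r with
    | zero => rfl
    | succ r ih => simp only [brkVec, gW, ih]; rfl
  simp only [brk, gS, this]

theorem gS_local3 {R : Type*} [CommRing R] {b : ℕ → ℕ}
    {D D' D'' : ∀ r : ℕ, Matrix (Fin (b r)) (Fin (b (r + 1))) R} (m r : ℕ) (hr : r + 2 ≤ m)
    (h1 : ∀ s, s < m → s ≠ r → s ≠ r + 1 → D s = D' s)
    (h2 : ∀ s, s < m → s ≠ r → s ≠ r + 1 → D s = D'' s)
    (h : D r * D (r+1) + D' r * D' (r+1) + D'' r * D'' (r+1) = 0) :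
    gS D m + gS D' m + gS D'' m = 0 := by
  have key : ∀ k, r + 2 + k ≤ m →
      gW D (r+2+k) + gW D' (r+2+k) + gW D'' (r+2+k) = 0 := by
    intro k
    induction k with
    | zero =>
      intro _
      have e1 : gW D' r = gW D r := gW_congr r (fun s hs => (h1 s (by omega) (by omega) (by omega)).symm)
      have e2 : gW D'' r = gW D r := gW_congr r (fun s hs => (h2 s (by omega) (by omega) (by omega)).symm)
      simp only [Nat.add_zero, gW, e1, e2, Matrix.vecMul_vecMul]
      rw [← Matrix.vecMul_add, ← Matrix.vecMul_add, h, Matrix.vecMul_zero]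
    | succ k ih =>
      intro hk
      have := ih (by omega)
      rw [← Nat.add_assoc]
      simp only [gW]
      rw [← h1 _ (by omega) (by omega) (by omega), ← h2 _ (by omega) (by omega) (by omega),
        ← Matrix.add_vecMul, ← Matrix.add_vecMul, this, Matrix.zero_vecMul]
  obtain ⟨k, rfl⟩ := Nat.exists_eq_add_of_le hr
  have := key k le_rfl
  simp only [gS, ← Finset.sum_add_distrib]
  apply Finset.sum_eq_zero
  intro j _
  exact congrFun this j

theorem gS_zero {R : Type*} [CommRing R] {b : ℕ → ℕ}
    {D : ∀ r : ℕ, Matrix (Fin (b r)) (Fin (b (r + 1))) R} (m r : ℕ) (hr : r < m)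
    (h : D r = 0) : gS D m = 0 := by
  have key : ∀ k, gW D (r + 1 + k) = 0 := by
    intro k
    induction k with
    | zero => simp [gW, h]
    | succ k ih => rw [← Nat.add_assoc]; simp only [gW]; rw [ih, Matrix.zero_vecMul]
  obtain ⟨k, rfl⟩ := Nat.exists_eq_add_of_le (show r + 1 ≤ m from hr)
  simp [gS, key k]

theorem gS_local2 {R : Type*} [CommRing R] {b : ℕ → ℕ}
    {D D' : ∀ r : ℕ, Matrix (Fin (b r)) (Fin (b (r + 1))) R} (m r : ℕ) (hr : r + 2 ≤ m)
    (h1 : ∀ s, s < m → s ≠ r → s ≠ r + 1 → D s = D' s)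
    (h : D r * D (r+1) + D' r * D' (r+1) = 0) :
    gS D m + gS D' m = 0 := by
  have := gS_local3 (D := D) (D' := D') (D'' := fun s => if s = r then 0 else D s) m r hr h1
    (by intro s _ hs _; simp [hs]) (by simpa using h)
  rwa [gS_zero (D := fun s => if s = r then 0 else D s) m r (by omega) (by simp), add_zero] at this

theorem gS_local1 {R : Type*} [CommRing R] {b : ℕ → ℕ}
    {D : ∀ r : ℕ, Matrix (Fin (b r)) (Fin (b (r + 1))) R} (m r : ℕ) (hr : r + 2 ≤ m)
    (h : D r * D (r+1) = 0) :
    gS D m = 0 := by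
  have := gS_local2 (D := D) (D' := fun s => if s = r then 0 else D s) m r hr
    (by intro s _ hs _; simp [hs]) (by simpa using h)
  rwa [gS_zero (D := fun s => if s = r then 0 else D s) m r (by omega) (by simp), add_zero] at this

section deriv
variable {K : Type*} [Field K] {N : ℕ}

theorem dM_mul {p q r : ℕ} (i : Fin N)
    (A : Matrix (Fin p) (Fin q) (MvPolynomial (Fin N) K))
    (B : Matrix (Fin q) (Fin r) (MvPolynomial (Fin N) K)) :
    dM i (A * B) = dM i A * B + A * dM i B := by
  ext1 x y
  simp only [dM, Matrix.mul_apply, Matrix.add_apply, map_sum, Derivation.leibniz, smul_eq_mul,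
    ← Finset.sum_add_distrib]
  exact Finset.sum_congr rfl fun _ _ => by ring

theorem dM_add {p q : ℕ} (i : Fin N)
    (A B : Matrix (Fin p) (Fin q) (MvPolynomial (Fin N) K)) :
    dM i (A + B) = dM i A + dM i B := by
  ext1 x y; simp [dM]

theorem dM_zero {p q : ℕ} (i : Fin N) :
    dM i (0 : Matrix (Fin p) (Fin q) (MvPolynomial (Fin N) K)) = 0 := by
  ext1 x y; simp [dM]

theorem dM_dM_lin {p q : ℕ} (i j : Fin N)
    (A : Matrix (Fin p) (Fin q) (MvPolynomial (Fin N) K)) (h : ∀ x y, (A x y).IsHomogeneous 1) :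
    dM i (dM j A) = 0 := by
  ext1 x y
  have := (h x y).pderiv (i := j)
  rw [← totalDegree_zero_iff_isHomogeneous, totalDegree_eq_zero_iff_eq_C] at this
  simp only [dM]
  rw [this]; simp

theorem dM_rel1 {p q r : ℕ} (i : Fin N)
    (A : Matrix (Fin p) (Fin q) (MvPolynomial (Fin N) K))
    (B : Matrix (Fin q) (Fin r) (MvPolynomial (Fin N) K)) (h : A * B = 0) :
    dM i A * B + A * dM i B = 0 := by
  rw [← dM_mul, h, dM_zero]

theorem dM_rel2 {p q r : ℕ} (i j : Fin N)
    (A : Matrix (Fin p) (Fin q) (MvPolynomial (Fin N) K))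
    (B : Matrix (Fin q) (Fin r) (MvPolynomial (Fin N) K)) (h : A * B = 0) :
    dM i (dM j A) * B + dM j A * dM i B + (dM i A * dM j B + A * dM i (dM j B)) = 0 := by
  rw [← dM_mul, ← dM_mul, ← dM_add, dM_rel1 _ _ _ h, dM_zero]

variable {b : ℕ → ℕ}

theorem pderiv_gW (D : ∀ r : ℕ, Matrix (Fin (b r)) (Fin (b (r + 1))) (MvPolynomial (Fin N) K))
    (i : Fin N) (r : ℕ) (hc : ∀ s, 1 ≤ s → s ≤ r → dM i (D s) = 0) (j) :
    pderiv i (gW D (r+1) j) = gW (fun s => if s = 0 then dM i (D s) else D s) (r+1) j := by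
  induction r with
  | zero => simp [gW, dM, Matrix.vecMul, dotProduct]
  | succ r ih =>
    rw [gW]
    conv_rhs => rw [gW]
    simp only [Matrix.vecMul, dotProduct, map_sum, Derivation.leibniz, smul_eq_mul]
    refine Finset.sum_congr rfl fun x _ => ?_
    rw [ih (fun s h1 h2 => hc s h1 (by omega))]
    have : pderiv i (D (r+1) x j) = 0 := congrFun (congrFun (hc (r+1) (by omega) le_rfl) x) j
    rw [this]; simp [mul_comm]

/-- Leibniz for a product whose inner factors are constant. -/
theorem pderiv_gS (D : ∀ r : ℕ, Matrix (Fin (b r)) (Fin (b (r + 1))) (MvPolynomial (Fin N) K))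
    (i : Fin N) (r : ℕ) (hc : ∀ s, 1 ≤ s → s ≤ r → dM i (D s) = 0) :
    pderiv i (gS D (r+2)) = gS (fun s => if s = 0 then dM i (D s) else D s) (r+2)
      + gS (fun s => if s = r+1 then dM i (D s) else D s) (r+2) := by
  have e : gW (fun s => if s = r+1 then dM i (D s) else D s) (r+1) = gW D (r+1) :=
    gW_congr _ (fun s hs => by simp [show s ≠ r+1 by omega])
  simp only [gS, map_sum, ← Finset.sum_add_distrib]
  refine Finset.sum_congr rfl fun j _ => ?_
  simp only [gW.eq_2 _ (r+1)]
  rw [e]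
  simp only [Matrix.vecMul, dotProduct, map_sum, Derivation.leibniz, smul_eq_mul,
    ← Finset.sum_add_distrib]
  refine Finset.sum_congr rfl fun x _ => ?_
  rw [pderiv_gW D i r hc]
  simp [dM]; ring

theorem pderiv2_gS (D : ∀ r : ℕ, Matrix (Fin (b r)) (Fin (b (r + 1))) (MvPolynomial (Fin N) K))
    (i j : Fin N) (r : ℕ) (hc : ∀ i, ∀ s, 1 ≤ s → s ≤ r → dM i (D s) = 0) :
    pderiv i (pderiv j (gS D (r+2))) =
      gS (fun s => if s = 0 then dM i (dM j (D s)) else D s) (r+2)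
      + gS (fun s => if s = r+1 then dM i (D s) else if s = 0 then dM j (D s) else D s) (r+2)
      + (gS (fun s => if s = 0 then dM i (D s) else if s = r + 1 then dM j (D s) else D s) (r+2)
      + gS (fun s => if s = r+1 then dM i (dM j (D s)) else D s) (r+2)) := by
  rw [pderiv_gS D j r (hc j), map_add, pderiv_gS _ i r, pderiv_gS _ i r]
  · refine congrArg₂ HAdd.hAdd (congrArg₂ HAdd.hAdd ?_ ?_) (congrArg₂ HAdd.hAdd ?_ ?_) <;>
      refine gS_congr _ fun s hs => ?_ <;> split_ifs <;> first | rfl | omega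
  · intro s h1 h2
    simp [show s ≠ r+1 by omega, hc i s h1 h2]
  · intro s h1 h2
    simp [show s ≠ 0 by omega, hc i s h1 h2]

/-- sliding family -/
noncomputable def slD (φ P Q : ∀ r : ℕ, Matrix (Fin (b r)) (Fin (b (r + 1))) (MvPolynomial (Fin N) K))
    (j : ℕ) : ∀ r : ℕ, Matrix (Fin (b r)) (Fin (b (r + 1))) (MvPolynomial (Fin N) K) :=
  fun s => if s < j then P s else if s = j then φ s else Q s

theorem slide (φ P Q : ∀ r : ℕ, Matrix (Fin (b r)) (Fin (b (r + 1))) (MvPolynomial (Fin N) K))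
    (m lo k : ℕ) (hm : lo + k + 1 ≤ m)
    (hcomp : ∀ r, r + 2 ≤ m → φ r * φ (r + 1) = 0)
    (h : ∀ j, lo ≤ j → j < lo + k → ∃ t, P j = dM t (φ j) ∧ Q (j+1) = dM t (φ (j+1))) :
    gS (slD φ P Q lo) m = (-1)^k * gS (slD φ P Q (lo + k)) m := by
  induction k with
  | zero => simp
  | succ k ih =>
    rw [ih (by omega) (fun j h1 h2 => h j h1 (by omega))]
    obtain ⟨t, hP, hQ⟩ := h (lo + k) (by omega) (by omega)
    have : gS (slD φ P Q (lo + k)) m + gS (slD φ P Q (lo + (k+1))) m = 0 := by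
      apply gS_local2 m (lo + k) (by omega)
      · intro s hs h1 h2
        simp only [slD]
        split_ifs <;> first | rfl | omega
      · have h1 := dM_rel1 t _ _ (hcomp (lo + k) (by omega))
        have h2 : ¬ (lo + k + 1 < lo + k) := by omega
        have h3 : (lo + k < lo + (k+1)) := by omega
        simp only [slD, hP, hQ, h2, ← Nat.add_assoc, lt_irrefl, if_true, if_false]; simp
        exact (add_comm _ _).trans h1
    rw [eq_neg_of_add_eq_zero_left this, pow_succ]; ring

end deriv

section keyid
variable {K : Type*} [Field K] {N : ℕ} {b : ℕ → ℕ}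

theorem mid_swap
    (φ : ∀ r : ℕ, Matrix (Fin (b r)) (Fin (b (r + 1))) (MvPolynomial (Fin N) K)) (m : ℕ)
    (hcomp : ∀ r, r + 2 ≤ m → φ r * φ (r + 1) = 0)
    (hdegmid : ∀ r, 1 ≤ r → r + 2 ≤ m → ∀ p q, (φ r p q).IsHomogeneous 1)
    (i : ℕ) (h1 : 1 ≤ i) (h2 : i + 3 ≤ m) (β γ : ℕ → Fin N)
    (hγ : ∀ s, s < m → s ≠ i → s ≠ i + 1 → γ s = β s) (hi : γ i = β (i+1)) (hi' : γ (i+1) = β i) :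
    brk φ m γ = - brk φ m β := by
  rw [brk_eq_gS, brk_eq_gS, eq_neg_iff_add_eq_zero]
  apply gS_local2 m i (by omega)
  · intro s hs h1 h2
    simp only [hγ s hs h1 h2]
  · have := dM_rel2 (β i) (β (i+1)) _ _ (hcomp i (by omega))
    rw [dM_dM_lin _ _ _ (hdegmid i h1 (by omega)),
      dM_dM_lin _ _ _ (hdegmid (i+1) (by omega) (by omega))] at this
    simpa [hi, hi'] using this

theorem key_alg
    (φ : ∀ r : ℕ, Matrix (Fin (b r)) (Fin (b (r + 1))) (MvPolynomial (Fin N) K)) (M : ℕ)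
    (hcomp : ∀ r, r + 2 ≤ M + 3 → φ r * φ (r + 1) = 0)
    (hdegmid : ∀ r, 1 ≤ r → r + 2 ≤ M + 3 → ∀ p q, (φ r p q).IsHomogeneous 1)
    (β : ℕ → Fin N)
    (hB : brk φ (M+3) (fun s => if s = M + 2 then β 0 else if s = 0 then β 1 else β (s+1)) +
      brk φ (M+3) (fun s => if s = 0 then β 0 else if s = M + 2 then β 1 else β (s+1)) = 0) :
    (brk φ (M+3) β + brk φ (M+3) (fun s => if s = 0 then β 1 else if s = 1 then β 0 else β s)) +
    (brk φ (M+3) (fun s => if s = M+1 then β 0 else if s = M+2 then β 1 else β (s+2)) +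
     brk φ (M+3) (fun s => if s = M+1 then β 1 else if s = M+2 then β 0 else β (s+2))) = 0 := by
  simp only [brk_eq_gS] at *
  let P : ∀ r : ℕ, Matrix (Fin (b r)) (Fin (b (r + 1))) (MvPolynomial (Fin N) K) :=
    fun s => if s = 0 then dM (β 0) (dM (β 1) (φ s)) else dM (β (s+1)) (φ s)
  let Q : ∀ r : ℕ, Matrix (Fin (b r)) (Fin (b (r + 1))) (MvPolynomial (Fin N) K) :=
    fun s => dM (β s) (φ s)
  let P' : ∀ r : ℕ, Matrix (Fin (b r)) (Fin (b (r + 1))) (MvPolynomial (Fin N) K) :=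
    fun s => dM (β (s+2)) (φ s)
  let Q' : (∀ r : ℕ, Matrix (Fin (b r)) (Fin (b (r + 1))) (MvPolynomial (Fin N) K)) →
      ∀ r : ℕ, Matrix (Fin (b r)) (Fin (b (r + 1))) (MvPolynomial (Fin N) K) :=
    fun X s => if s < M + 2 then dM (β (s+1)) (φ s) else X s
  let X : ∀ r : ℕ, Matrix (Fin (b r)) (Fin (b (r + 1))) (MvPolynomial (Fin N) K) :=
    fun s => dM (β 0) (dM (β 1) (φ s))
  have hL := slide φ P Q (M+3) 1 (M+1) (by omega) hcomp (by
    intro j h1 h2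
    exact ⟨β (j+1), by simp [P, show j ≠ 0 by omega], rfl⟩)
  have hV : ∀ X, _ := fun X => slide φ P' (Q' X) (M+3) 0 (M+1) (by omega) hcomp (by
    intro j h1 h2
    exact ⟨β (j+2), rfl, by simp [Q', show j < M + 1 by omega]⟩)
  have hleft : gS (fun s => dM (β s) (φ s)) (M+3) +
      gS (fun s => dM (if s = 0 then β 1 else if s = 1 then β 0 else β s) (φ s)) (M+3) +
      gS (slD φ P Q 1) (M+3) = 0 := by
    apply gS_local3 (M+3) 0 (by omega)
    · intro s hs h1 h2
      simp only [zero_add] at h2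
      simp [h1, h2]
    · intro s hs h1 h2
      simp only [slD]
      rw [if_neg (by omega), if_neg (by omega)]
    · have := dM_rel2 (β 0) (β 1) _ _ (hcomp 0 (by omega))
      rw [dM_dM_lin _ _ _ (hdegmid (0+1) (by omega) (by omega))] at this
      simp [slD, P] at this ⊢
      rw [← this]; abel
  have hright : gS (fun s => dM (if s = M+1 then β 0 else if s = M+2 then β 1 else β (s+2)) (φ s)) (M+3) +
      gS (fun s => dM (if s = M+1 then β 1 else if s = M+2 then β 0 else β (s+2)) (φ s)) (M+3) +
      gS (slD φ P' (Q' X) (0 + (M+1))) (M+3) = 0 := by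
    apply gS_local3 (M+3) (M+1) (by omega)
    · intro s hs h1 h2
      simp only [h1, if_false, show s ≠ M + 2 from h2]
    · intro s hs h1 h2
      simp only [slD, h1, if_false, show s ≠ M + 2 from h2]
      rw [if_pos (by omega)]
    · have := dM_rel2 (β 0) (β 1) _ _ (hcomp (M+1) (by omega))
      rw [dM_dM_lin _ _ _ (hdegmid (M+1) (by omega) (by omega))] at this
      simp [slD, Q', X] at this ⊢
      rw [← this]; abel
  have hZ : gS (slD φ P' (Q' φ) 0) (M+3) = 0 := by
    rw [hV φ, gS_local1 (M+3) (M+1) (by omega), mul_zero]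
    simpa [slD, Q'] using hcomp (M+1) (by omega)
  have hD := pderiv2_gS (slD φ P' (Q' φ) 0) (β 0) (β 1) (M+1) (by
    intro i s h1 h2
    simp only [slD, Q']
    rw [if_neg (by omega), if_neg (by omega), if_pos (by omega)]
    exact dM_dM_lin _ _ _ (hdegmid s h1 (by omega)))
  rw [show M + 1 + 2 = M + 3 from rfl, hZ, map_zero, map_zero] at hD
  have e1 : gS (fun s => if s = 0 then dM (β 0) (dM (β 1) (slD φ P' (Q' φ) 0 s))
      else slD φ P' (Q' φ) 0 s) (M+3) = gS (slD φ P Q (1 + (M+1))) (M+3) := by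
    refine gS_congr _ fun s hs => ?_
    simp only [slD, P, Q', Nat.not_lt_zero, if_false]
    split_ifs <;> first | rfl | omega
  have e2 : gS (fun s => if s = M+1+1 then dM (β 0) (dM (β 1) (slD φ P' (Q' φ) 0 s))
      else slD φ P' (Q' φ) 0 s) (M+3) = gS (slD φ P' (Q' X) 0) (M+3) := by
    refine gS_congr _ fun s hs => ?_
    simp only [slD, X, Q', Nat.not_lt_zero, if_false]
    split_ifs <;> first | rfl | omega
  have e3 : gS (fun s => if s = M+1+1 then dM (β 0) (slD φ P' (Q' φ) 0 s)
      else if s = 0 then dM (β 1) (slD φ P' (Q' φ) 0 s) else slD φ P' (Q' φ) 0 s) (M+3) =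
      gS (fun s => dM (if s = M + 2 then β 0 else if s = 0 then β 1 else β (s+1)) (φ s)) (M+3) := by
    refine gS_congr _ fun s hs => ?_
    simp only [slD, Q', Nat.not_lt_zero, if_false]
    split_ifs <;> first | rfl | omega
  have e4 : gS (fun s => if s = 0 then dM (β 0) (slD φ P' (Q' φ) 0 s)
      else if s = M+1+1 then dM (β 1) (slD φ P' (Q' φ) 0 s) else slD φ P' (Q' φ) 0 s) (M+3) =
      gS (fun s => dM (if s = 0 then β 0 else if s = M + 2 then β 1 else β (s+1)) (φ s)) (M+3) := by
    refine gS_congr _ fun s hs => ?_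
    simp only [slD, Q', Nat.not_lt_zero, if_false]
    split_ifs <;> first | rfl | omega
  rw [e1, e2, e3, e4] at hD
  have hX := hV X
  have hsq : ((-1 : MvPolynomial (Fin N) K)^(M+1)) * (-1)^(M+1) = 1 := by
    rw [← mul_pow]; simp
  generalize ((-1 : MvPolynomial (Fin N) K)^(M+1)) = u at *
  have hX' : gS (slD φ P' (Q' X) (0 + (M+1))) (M+3) = u * gS (slD φ P' (Q' X) 0) (M+3) := by
    rw [hX, ← mul_assoc, hsq, one_mul]
  rw [hL] at hleft
  rw [hX'] at hright
  linear_combination hleft + hright + u * hD + u * hB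

end keyid

section comb
open Equiv Equiv.Perm

/-- The permutations under which `F` transforms by the sign. -/
def sgnSub {α R : Type*} [AddCommGroup R] {m : ℕ} (F : (Fin m → α) → R) :
    Submonoid (Perm (Fin m)) where
  carrier := {ρ | ∀ a, F (a ∘ ρ) = (sign ρ : ℤ) • F a}
  one_mem' := by intro a; simp
  mul_mem' := by
    intro ρ τ h1 h2 a
    have := h2 (a ∘ ρ)
    rw [h1 a] at this
    rw [Perm.coe_mul, ← Function.comp_assoc, this, smul_smul, Perm.sign_mul, mul_comm (sign ρ)]
    simp

theorem mem_sgnSub {α R : Type*} [AddCommGroup R] {m : ℕ} {F : (Fin m → α) → R} {ρ : Perm (Fin m)} :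
    ρ ∈ sgnSub F ↔ ∀ a, F (a ∘ ρ) = (sign ρ : ℤ) • F a := Iff.rfl

theorem swap_mem_sgnSub {α R : Type*} [AddCommGroup R] {m : ℕ} {F : (Fin m → α) → R} {i j : Fin m}
    (hij : i ≠ j) : swap i j ∈ sgnSub F ↔ ∀ a, F (a ∘ swap i j) = - F a := by
  rw [mem_sgnSub]; simp [sign_swap hij]

theorem sign_rev (m : ℕ) :
    (sign (Fin.revPerm : Perm (Fin m)) : ℤ) = if m % 4 = 0 ∨ m % 4 = 1 then 1 else -1 := by
  have h : (sign (Fin.revPerm : Perm (Fin m))) = (-1) ^ (m * (m-1) / 2) := by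
    rw [sign_eq_prod_prod_Iio]
    have : ∀ j : Fin m, ∏ i ∈ Finset.Iio j,
        (if (Fin.revPerm : Perm (Fin m)) i < Fin.revPerm j then (1:ℤˣ) else -1) = (-1)^(j:ℕ) := by
      intro j
      rw [Finset.prod_congr rfl (g := fun _ => (-1 : ℤˣ))]
      · simp
      · intro i hi
        have : i < j := by simpa using hi
        simp [Fin.rev_lt_rev, this.le]
    rw [Finset.prod_congr rfl (fun j _ => this j), Finset.prod_pow_eq_pow_sum,
      Fin.sum_univ_eq_sum_range (fun x => x), Finset.sum_range_id]
  rw [h]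
  have h4 := Nat.div_add_mod m 4
  have hr : m % 4 < 4 := Nat.mod_lt _ (by norm_num)
  clear h
  generalize m / 4 = q at *
  generalize m % 4 = r at *
  subst h4
  interval_cases r
  · have : (4 * q + 0) * (4 * q + 0 - 1) / 2 = 2 * (q * (4 * q - 1)) := by
      rw [show (4 * q + 0) * (4 * q + 0 - 1) = 2 * (2 * (q * (4 * q - 1))) by simp only [add_zero]; ring]
      simp
    rw [this, pow_mul]; simp
  · have : (4 * q + 1) * (4 * q + 1 - 1) / 2 = 2 * (q * (4 * q + 1)) := by
      rw [show (4 * q + 1) * (4 * q + 1 - 1) = 2 * (2 * (q * (4 * q + 1))) by simp only [Nat.add_sub_cancel]; ring]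
      simp
    rw [this, pow_mul]; simp
  · have : (4 * q + 2) * (4 * q + 2 - 1) / 2 = 2 * (4 * q * q + 3 * q) + 1 := by
      rw [show (4 * q + 2) * (4 * q + 2 - 1) = 2 * (2 * (4 * q * q + 3 * q) + 1) by
        rw [show 4 * q + 2 - 1 = 4 * q + 1 by omega]; ring]
      simp
    rw [this, pow_succ, pow_mul]; simp
  · have : (4 * q + 3) * (4 * q + 3 - 1) / 2 = 2 * (4 * q * q + 5 * q + 1) + 1 := by
      rw [show (4 * q + 3) * (4 * q + 3 - 1) = 2 * (2 * (4 * q * q + 5 * q + 1) + 1) by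
        rw [show 4 * q + 3 - 1 = 4 * q + 2 by omega]; ring]
      simp
    rw [this, pow_succ, pow_mul]; simp

theorem swap_ends {M : ℕ} (S : Submonoid (Perm (Fin (M+2))))
    (hmid : ∀ i : ℕ, ∀ (h1 : 1 ≤ i) (h2 : i + 1 ≤ M),
      swap (⟨i, by omega⟩ : Fin (M+2)) ⟨i+1, by omega⟩ ∈ S)
    (hrev : Fin.revPerm ∈ S) : swap (0 : Fin (M+2)) (Fin.last (M+1)) ∈ S := by
  have h1 : ∀ k i : ℕ, ∀ (h1 : 1 ≤ i) (h2 : i + 1 + k ≤ M),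
      swap (⟨i, by omega⟩ : Fin (M+2)) ⟨i+1+k, by omega⟩ ∈ S := by
    intro k
    induction k with
    | zero => intro i h1 h2; exact hmid i h1 h2
    | succ k ih =>
      intro i h1 h2
      have e : swap (⟨i, by omega⟩ : Fin (M+2)) ⟨i+1+(k+1), by omega⟩ =
          swap (⟨i+1+k, by omega⟩ : Fin (M+2)) ⟨i+1+k+1, by omega⟩ *
          swap (⟨i, by omega⟩ : Fin (M+2)) ⟨i+1+k, by omega⟩ *
          swap (⟨i+1+k, by omega⟩ : Fin (M+2)) ⟨i+1+k+1, by omega⟩ := by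
        rw [swap_mul_swap_mul_swap]
        · simp [swap_comm, Nat.add_assoc]
        · rw [ne_eq, Fin.ext_iff]; dsimp only; omega
        · rw [ne_eq, Fin.ext_iff]; dsimp only; omega
      rw [e]
      exact S.mul_mem (S.mul_mem (hmid _ (by omega) (by omega)) (ih i h1 (by omega)))
        (hmid _ (by omega) (by omega))
  have h2 : ∀ x y : Fin (M+2), x < y → (x ≠ 0 ∧ x ≠ Fin.last _) → (y ≠ 0 ∧ y ≠ Fin.last _) →
      swap x y ∈ S := by
    intro x y hlt hx hy
    obtain ⟨x, hx'⟩ := x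
    obtain ⟨y, hy'⟩ := y
    simp [Fin.ext_iff] at hlt hx hy
    obtain ⟨k, rfl⟩ := Nat.exists_eq_add_of_le (show x + 1 ≤ y from hlt)
    exact h1 k x (by omega) (by omega)
  have h3 : ∀ f : Perm {x : Fin (M+2) // x ≠ 0 ∧ x ≠ Fin.last _}, ofSubtype f ∈ S := by
    intro f
    induction f using swap_induction_on with
    | one => simp [S.one_mem]
    | swap_mul f x y hxy ih =>
      rw [map_mul]
      refine S.mul_mem ?_ ih
      rw [ofSubtype_swap_eq]
      have : (x : Fin (M+2)) ≠ y := fun h => hxy (Subtype.ext h)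
      rcases lt_or_gt_of_ne this with h | h
      · exact h2 _ _ h x.2 y.2
      · rw [swap_comm]; exact h2 _ _ h y.2 x.2
  have hfix0 : ((Fin.revPerm : Perm (Fin (M+2))) * swap (0 : Fin (M+2)) (Fin.last (M+1))) 0 = 0 := by
    simp
  have hfixl : ((Fin.revPerm : Perm (Fin (M+2))) * swap (0 : Fin (M+2)) (Fin.last (M+1))) (Fin.last _)
      = Fin.last _ := by
    simp
  set g : Perm (Fin (M+2)) := Fin.revPerm * swap (0 : Fin (M+2)) (Fin.last (M+1)) with hg
  have hp : ∀ x, (g x ≠ 0 ∧ g x ≠ Fin.last _) ↔ (x ≠ 0 ∧ x ≠ Fin.last _) := by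
    intro x
    have a1 : g x = 0 ↔ x = 0 := by conv_lhs => rw [← hfix0, g.injective.eq_iff]
    have a2 : g x = Fin.last _ ↔ x = Fin.last _ := by
      conv_lhs => rw [← hfixl, g.injective.eq_iff]
    simp only [ne_eq, a1, a2]
  have hgS : g ∈ S := by
    rw [← ofSubtype_subtypePerm (p := fun x => x ≠ 0 ∧ x ≠ Fin.last _) (f := g) hp]
    · exact h3 _
    · intro x hx
      constructor
      · rintro rfl; exact hx hfix0
      · rintro rfl; exact hx hfixl
  have : swap (0 : Fin (M+2)) (Fin.last (M+1)) = Fin.revPerm * g := by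
    rw [hg, ← mul_assoc]
    have : (Fin.revPerm : Perm (Fin (M+2))) * Fin.revPerm = 1 := by ext x; simp
    rw [this, one_mul]
  rw [this]
  exact S.mul_mem hrev hgS

/-- The cyclic sum. -/
def cyc {α R : Type*} [AddCommGroup R] {m : ℕ} [NeZero m] (F : (Fin m → α) → R) (a : Fin m → α) : R :=
  ∑ k : Fin m, F (fun r => a (r + ((k + 1) + (k + 1))))

theorem cyc_top {α R : Type*} [AddCommGroup R] {M : ℕ} (F : (Fin (M+2) → α) → R)
    (hadj : ∀ (i : Fin (M+2)) (a : Fin (M+2) → α), cyc F (a ∘ swap i (i+1)) = - cyc F a)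
    (τ : Perm (Fin (M+2))) : τ ∈ sgnSub (cyc F) := by
  have : (⊤ : Submonoid (Perm (Fin (M+2)))) ≤ sgnSub (cyc F) := by
    rw [← mclosure_swap_castSucc_succ (M+1), Submonoid.closure_le]
    rintro _ ⟨i, rfl⟩
    rw [SetLike.mem_coe]
    rw [swap_mem_sgnSub (by simp [Fin.ext_iff])]
    intro a
    have := hadj i.castSucc a
    rwa [Fin.coeSucc_eq_succ] at this
  exact this trivial

theorem cyc_adj {α R : Type*} [AddCommGroup R] {M : ℕ} (F : (Fin (M+2) → α) → R)
    (hmid : ∀ i : Fin (M+2), i ≠ 0 → i + 1 + 1 ≠ 0 → ∀ a, F (a ∘ swap i (i+1)) = - F a)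
    (hkey : ∀ a, (F a + F (a ∘ swap 1 0)) + (F (fun r => a (r + (1 + 1))) +
      F ((fun r => a (r + (1 + 1))) ∘ swap (-1-1) (-1))) = 0)
    (h2 : (1 : Fin (M+2)) + 1 ≠ 0)
    (i : Fin (M+2)) (a : Fin (M+2) → α) : cyc F (a ∘ swap i (i+1)) = - cyc F a := by
  rw [eq_neg_iff_add_eq_zero, cyc, cyc, ← Finset.sum_add_distrib]
  let t : Fin (M+2) → R := fun k =>
    F (fun r => a (r + ((k + 1) + (k + 1)))) +
    F ((fun r => a (r + ((k + 1) + (k + 1)))) ∘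
      swap (i - ((k + 1) + (k + 1))) (i - ((k + 1) + (k + 1)) + 1))
  have ht : ∀ k, F (fun r => (a ∘ swap i (i+1)) (r + ((k + 1) + (k + 1)))) +
      F (fun r => a (r + ((k + 1) + (k + 1)))) = t k := by
    intro k
    simp only [t]
    rw [add_comm]
    congr 2
    funext r
    simp only [Function.comp, swap_apply_def]
    congr 1
    have e1 : r + ((k + 1) + (k + 1)) = i ↔ r = i - ((k + 1) + (k + 1)) := eq_sub_iff_add_eq.symm
    have e2 : r + ((k + 1) + (k + 1)) = i + 1 ↔ r = i - ((k + 1) + (k + 1)) + 1 := by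
      rw [sub_add_eq_add_sub, eq_sub_iff_add_eq]
    simp only [e1, e2]
    split_ifs <;> abel
  simp only [ht]
  let g : Fin (M+2) → R := fun k => if i - ((k + 1) + (k + 1)) = 0 then t k else 0
  let h : Fin (M+2) → R := fun k => if i - ((k + 1) + (k + 1)) + 1 + 1 = 0 then t k else 0
  have h0 : ∀ k, t k = g k + h k := by
    intro k
    simp only [g, h]
    by_cases c1 : i - ((k + 1) + (k + 1)) = 0
    · have c2 : ¬ (i - ((k + 1) + (k + 1)) + 1 + 1 = 0) := by rw [c1, zero_add]; exact h2
      rw [if_pos c1, if_neg c2, add_zero]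
    · by_cases c2 : i - ((k + 1) + (k + 1)) + 1 + 1 = 0
      · rw [if_neg c1, if_pos c2, zero_add]
      · rw [if_neg c1, if_neg c2, add_zero]
        simp only [t]
        rw [hmid _ c1 c2]; simp
  have hs : ∀ k, g k + h (k + 1) = 0 := by
    intro k
    simp only [g, h]
    have e : i - ((k + 1 + 1) + (k + 1 + 1)) + 1 + 1 = i - ((k + 1) + (k + 1)) := by abel
    rw [e]
    by_cases c1 : i - ((k + 1) + (k + 1)) = 0
    · rw [if_pos c1, if_pos c1]
      simp only [t]
      have c2 : i - ((k + 1 + 1) + (k + 1 + 1)) = -1-1 := by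
        rw [← sub_eq_zero, ← c1]; abel
      rw [c1, c2]
      have := hkey (fun r => a (r + ((k + 1) + (k + 1))))
      rw [zero_add, swap_comm (0 : Fin (M+2)) 1, sub_add_cancel]
      have e3 : ∀ r, r + ((k + 1 + 1) + (k + 1 + 1)) = r + (1 + 1) + ((k + 1) + (k + 1)) := by
        intro r; abel
      simp only [e3]
      exact this
    · rw [if_neg c1, if_neg c1, add_zero]
  simp only [h0]
  rw [Finset.sum_add_distrib, ← Equiv.sum_comp (Equiv.addRight (1 : Fin (M+2))) h,
    ← Finset.sum_add_distrib]
  exact Finset.sum_eq_zero fun k _ => hs k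

end comb

section final
open Equiv Equiv.Perm
variable {K : Type*} [Field K] {N : ℕ} {b : ℕ → ℕ}

/-- The bracket as a function of a tuple indexed by `Fin (M+2)`. -/
noncomputable def brkF
    (φ : ∀ r : ℕ, Matrix (Fin (b r)) (Fin (b (r + 1))) (MvPolynomial (Fin N) K)) (M : ℕ)
    (a : Fin (M+2) → Fin N) : MvPolynomial (Fin N) K :=
  brk φ (M+2) (fun s => a (Fin.ofNat (M+2) s))

theorem brk_eq_brkF
    (φ : ∀ r : ℕ, Matrix (Fin (b r)) (Fin (b (r + 1))) (MvPolynomial (Fin N) K)) (M : ℕ)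
    (β : ℕ → Fin N) (a : Fin (M+2) → Fin N) (h : ∀ s (hs : s < M+2), β s = a ⟨s, hs⟩) :
    brk φ (M+2) β = brkF φ M a := by
  rw [brkF, brk_eq_gS, brk_eq_gS]
  refine gS_congr _ fun s hs => ?_
  have : Fin.ofNat (M+2) s = ⟨s, hs⟩ := Fin.ext (Nat.mod_eq_of_lt hs)
  rw [h s hs, this]

theorem dbrk_eq_cyc
    (φ : ∀ r : ℕ, Matrix (Fin (b r)) (Fin (b (r + 1))) (MvPolynomial (Fin N) K)) (M : ℕ)
    (f : ℕ → Fin N) : dbrk φ (M+2) f = cyc (brkF φ M) (fun x => f x) := by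
  rw [dbrk, cyc, Finset.sum_range]
  refine Finset.sum_congr rfl fun k _ => ?_
  apply brk_eq_brkF
  intro s hs
  congr 1
  simp only [Fin.val_add, Fin.val_one, Nat.add_mod_mod, Nat.mod_add_mod]
  congr 1
  ring

theorem main_aux
    (φ : ∀ r : ℕ, Matrix (Fin (b r)) (Fin (b (r + 1))) (MvPolynomial (Fin N) K)) (M : ℕ)
    (hcomp : ∀ r, r + 2 ≤ M + 2 → φ r * φ (r + 1) = 0)
    (hdegmid : ∀ r, 1 ≤ r → r + 2 ≤ M + 2 → ∀ p q, (φ r p q).IsHomogeneous 1)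
    (ε : ℤ) (hε : ε = if (M+2) % 4 = 0 ∨ (M+2) % 4 = 1 then 1 else -1)
    (hrev : ∀ a : ℕ → Fin N, brk φ (M+2) a = ε • brk φ (M+2) (fun r => a (M + 2 - 1 - r)))
    (i : Fin (M+2)) (a : Fin (M+2) → Fin N) :
    cyc (brkF φ M) (a ∘ swap i (i+1)) = - cyc (brkF φ M) a := by
  have hR : Fin.revPerm ∈ sgnSub (brkF φ M) := by
    rw [mem_sgnSub]
    intro a
    rw [sign_rev, ← hε, brkF, hrev]
    refine congrArg (fun z => ε • z) ?_
    apply brk_eq_brkF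
    intro s hs
    simp only [Function.comp]
    congr 1
    ext
    simp [Fin.val_rev]
    rw [Nat.mod_eq_of_lt (by omega)]
    omega
  have hM : ∀ i : ℕ, ∀ (h1 : 1 ≤ i) (h2 : i + 1 ≤ M),
      swap (⟨i, by omega⟩ : Fin (M+2)) ⟨i+1, by omega⟩ ∈ sgnSub (brkF φ M) := by
    intro i h1 h2
    rw [swap_mem_sgnSub (by simp)]
    intro a
    have key : ∀ s (hs : s < M + 2), Fin.ofNat (M+2) s = ⟨s, hs⟩ :=
      fun s hs => Fin.ext (Nat.mod_eq_of_lt hs)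
    unfold brkF
    apply mid_swap φ (M+2) hcomp hdegmid i h1 (by omega)
    · intro s hs c1 c2
      simp only [Function.comp, key s hs]
      rw [swap_apply_of_ne_of_ne] <;> simpa [Fin.ext_iff]
    · simp only [Function.comp, key i (by omega), key (i+1) (by omega), swap_apply_left]
    · simp only [Function.comp, key i (by omega), key (i+1) (by omega), swap_apply_right]
  have hE := swap_ends _ hM hR
  rw [swap_mem_sgnSub (by simp [Fin.ext_iff])] at hE
  rcases M with _ | M
  · have e1 : swap i (i+1) = swap 0 (Fin.last (0+1)) := by
      revert i; decide
    have e2 : ∀ k : Fin (0+2), (k + 1) + (k + 1) = 0 := by decide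
    rw [e1]
    simp only [cyc, e2, add_zero]
    rw [← Finset.sum_neg_distrib]
    exact Finset.sum_congr rfl fun k _ => hE a
  · apply cyc_adj
    · intro i h1 h2 a
      by_cases hl : i = Fin.last _
      · subst hl
        rw [Fin.last_add_one, swap_comm]
        exact hE a
      · have hv : (i + 1 : Fin (M+1+2)).val = i.val + 1 := by
          rw [Fin.val_add_one, if_neg hl]
        have hi : i.val < M + 2 := by
          have := i.2
          have : i.val ≠ M + 2 := fun h => hl (Fin.ext h)
          omega
        have hl2 : i + 1 ≠ Fin.last _ := by
          intro h
          apply h2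
          rw [h, Fin.last_add_one]
        have hi2 : i.val + 1 ≠ M + 2 := fun h => hl2 (Fin.ext (by rw [hv, h]; rfl))
        have hi0 : i.val ≠ 0 := fun h => h1 (Fin.ext h)
        have := hM i.val (by omega) (by omega)
        rw [swap_mem_sgnSub (by rw [ne_eq, Fin.ext_iff]; dsimp only; omega)] at this
        have e : (⟨i.val + 1, by omega⟩ : Fin (M+1+2)) = i + 1 := Fin.ext hv.symm
        rw [e] at this
        exact this a
    · intro a
      let β : ℕ → Fin N := fun s => a (Fin.ofNat (M+1+2) s)
      have key : ∀ s (hs : s < M + 1 + 2), Fin.ofNat (M+1+2) s = ⟨s, hs⟩ :=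
        fun s hs => Fin.ext (Nat.mod_eq_of_lt hs)
      have hB : brk φ (M+1+2) (fun s => if s = M + 2 then β 0 else if s = 0 then β 1 else β (s+1)) +
          brk φ (M+1+2) (fun s => if s = 0 then β 0 else if s = M + 2 then β 1 else β (s+1)) = 0 := by
        rw [← eq_neg_iff_add_eq_zero]
        let c : Fin (M+1+2) → Fin N := fun s => if s.val = 0 then β 0 else
          if s.val = M + 2 then β 1 else β (s.val+1)
        rw [brk_eq_brkF φ (M+1) (fun s => if s = 0 then β 0 else if s = M + 2 then β 1 else β (s+1)) c
          (fun s hs => rfl), ← hE c]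
        apply brk_eq_brkF
        intro s hs
        simp only [Function.comp, swap_apply_def, c, Fin.ext_iff, Fin.val_last, Fin.val_zero]
        by_cases h1 : s = M + 2
        · subst h1; simp
        · by_cases h0 : s = 0
          · subst h0; simp
          · simp [h0, h1]
      have := key_alg φ M hcomp hdegmid β hB
      have n1 : (-1 : Fin (M+1+2)) = ⟨M+2, by omega⟩ := by
        rw [neg_eq_iff_add_eq_zero]; ext; simp [Fin.val_add]; ring_nf; simp
      have n2 : (-1 - 1 : Fin (M+1+2)) = ⟨M+1, by omega⟩ := by
        rw [n1, sub_eq_iff_eq_add]; ext; simp [Fin.val_add]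
      have w0 : Fin.ofNat (M+1+2) 0 = 0 := rfl
      have w1 : Fin.ofNat (M+1+2) 1 = 1 := rfl
      have w2 : Fin.ofNat (M+1+2) (M+1+2) = 0 := by ext; simp
      have w3 : Fin.ofNat (M+1+2) (M+2+2) = 1 := by
        ext; rw [Fin.val_ofNat, show M + 2 + 2 = 1 + (M+1+2) by ring, Nat.add_mod_right]; rfl
      have w4 : ∀ s (hs : s < M+1+2), (⟨s, hs⟩ : Fin (M+1+2)) + (1 + 1) = Fin.ofNat (M+1+2) (s+2) := by
        intro s hs
        ext
        simp only [Fin.val_add, Fin.val_one, Nat.add_mod_mod, Nat.mod_add_mod, Fin.val_ofNat]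
      rw [brk_eq_brkF φ (M+1) β a (fun s hs => by simp only [β, key s hs]),
        brk_eq_brkF φ (M+1) _ (a ∘ swap 1 0) ?_,
        brk_eq_brkF φ (M+1) _ (fun r => a (r + (1 + 1))) ?_,
        brk_eq_brkF φ (M+1) _ ((fun r => a (r + (1 + 1))) ∘ swap (-1-1) (-1)) ?_] at this
      · exact this
      · intro s hs
        rw [n2, n1]
        simp only [Function.comp, swap_apply_def, Fin.ext_iff]
        split_ifs with h1 h2
        · rw [w4, w3]; rfl
        · rw [w4, w2]; rfl
        · rw [w4]
      · intro s hs
        rw [w4]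
        split_ifs with h1 h2
        · subst h1; rw [w2]; rfl
        · subst h2; rw [w3]; rfl
        · rfl
      · intro s hs
        have u1 : ((1 : Fin (M+1+2)).val) = 1 := rfl
        simp only [Function.comp, swap_apply_def, Fin.ext_iff, u1, Fin.val_zero]
        by_cases h0 : s = 0
        · subst h0; simp only [β, w1, if_true]; simp
        · by_cases h1 : s = 1
          · subst h1; simp only [β, w0]; simp
          · simp only [h0, h1, if_false, β, key s hs]
    · intro h
      have := congrArg Fin.val h
      simp [Fin.val_add] at this
      rw [Nat.mod_eq_of_lt (by omega)] at this
      omega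

end final

/-- In the bracket setup, assuming the reversal identity
`[a_1,…,a_m] = ε·[a_m,…,a_1]` with `ε = +1` for `m ≡ 0,1 (mod 4)` and `ε = −1` for
`m ≡ 2,3 (mod 4)`, the double bracket is alternating: for every `τ ∈ S_m`,
`[[a_{τ(1)}, …, a_{τ(m)}]] = sign(τ)·[[a_1, …, a_m]]`. -/
theorem stmt9 (K : Type*) [Field K] (n : ℕ) (hn : 4 ≤ n) (m : ℕ) (hm : m = n - 2)
    (b : ℕ → ℕ) (hbpos : ∀ r, r ≤ m → 0 < b r) (hb0 : b 0 = 1) (hbm : b m = 1)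
    (φ : ∀ r : ℕ, Matrix (Fin (b r)) (Fin (b (r + 1))) (MvPolynomial (Fin (n - 1)) K))
    (hcomp : ∀ r, r + 2 ≤ m → φ r * φ (r + 1) = 0)
    (hdeg1 : ∀ p q, (φ 0 p q).IsHomogeneous 2)
    (hdegm : ∀ p q, (φ (m - 1) p q).IsHomogeneous 2)
    (hdegmid : ∀ r, 1 ≤ r → r + 2 ≤ m → ∀ p q, (φ r p q).IsHomogeneous 1)
    (ε : ℤ) (hε : ε = if m % 4 = 0 ∨ m % 4 = 1 then 1 else -1)
    (hrev : ∀ a : ℕ → Fin (n - 1), brk φ m a = ε • brk φ m (fun r => a (m - 1 - r)))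
    (τ : Equiv.Perm (Fin m)) (a : ℕ → Fin (n - 1)) :
    dbrk φ m (fun r => if h : r < m then a (τ ⟨r, h⟩ : ℕ) else a r)
      = (Equiv.Perm.sign τ : ℤ) • dbrk φ m a := by
  obtain ⟨M, rfl⟩ : ∃ M, m = M + 2 := ⟨m - 2, by omega⟩
  rw [dbrk_eq_cyc, dbrk_eq_cyc]
  have h := cyc_top (brkF φ M) (main_aux φ M hcomp hdegmid ε hε hrev) τ (fun x => a x)
  rw [← h]
  congr 1
  funext x
  simp
end

section
/- With the brace setup below (n ≥ 5), let i, k, ℓ ∈ {1,…,n−1} and a_1, …, a_{n−3} ∈ {1,…,n−1} with i ∈ {a_1, …, a_{n−3}}. Then for every permutation τ ∈ S_{n−3} we have {i, a_{τ(1)}, …, a_{τ(n−3)}, k, ℓ} = sign(τ) · {i, a_1, …, a_{n−3}, k, ℓ}. -/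
open MvPolynomial

/-- The row vector `P(a_1,a_2)·(∂φ_2/∂x_{a_3})⋯(∂φ_{r+1}/∂x_{a_{r+2}})` (0-based: the
sequence `c` is indexed from 0, `φ r` is the paper's `φ_{r+1}`). -/
noncomputable def braceVec {K : Type*} [Field K] {N : ℕ} {b : ℕ → ℕ}
    (φ : ∀ r : ℕ, Matrix (Fin (b r)) (Fin (b (r + 1))) (MvPolynomial (Fin N) K))
    (P : Fin N → Fin N → Fin (b 1) → K)
    (c : ℕ → Fin N) : ∀ r : ℕ, Fin (b (r + 1)) → MvPolynomial (Fin N) K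
  | 0 => fun q => C (P (c 0) (c 1) q)
  | (r + 1) => Matrix.vecMul (braceVec φ P c r)
      (fun p q => pderiv (c (r + 2)) (φ (r + 1) p q))

/-- The brace symbol `{a_1 a_2 ⋯ a_n} = P(a_1,a_2)·(∂φ_2/∂x_{a_3})⋯(∂φ_{m−1}/∂x_{a_{n−2}})
·Q(a_{n−1},a_n)` (a scalar, realized as a constant polynomial). Here `nn` is the paper's
`n`, `m = nn − 2`, and `h` records `m − 1 = m − 2 + 1`. -/
noncomputable def braceFn {K : Type*} [Field K] {N : ℕ} {b : ℕ → ℕ}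
    (φ : ∀ r : ℕ, Matrix (Fin (b r)) (Fin (b (r + 1))) (MvPolynomial (Fin N) K))
    (P : Fin N → Fin N → Fin (b 1) → K)
    (m : ℕ) (Q : Fin N → Fin N → Fin (b (m - 1)) → K) (h : m - 1 = m - 2 + 1)
    (nn : ℕ) (c : ℕ → Fin N) : MvPolynomial (Fin N) K :=
  ∑ p : Fin (b (m - 1)),
    braceVec φ P c (m - 2) (Fin.cast (congrArg b h) p) * C (Q (c (nn - 2)) (c (nn - 1)) p)

theorem aux_perm {α β : Type*} [AddCommGroup β] (M : ℕ) (f : (ℕ → α) → β)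
    (hf : ∀ c : ℕ → α, (∃ s, 1 ≤ s ∧ s ≤ M ∧ c s = c 0) → ∀ s, 1 ≤ s → s + 1 ≤ M →
      f (fun r => c (Equiv.swap s (s+1) r)) = - f c)
    (τ : Equiv.Perm (Fin M)) : ∀ c : ℕ → α, (∃ s, 1 ≤ s ∧ s ≤ M ∧ c s = c 0) → 
    f (fun r => if h : 1 ≤ r ∧ r - 1 < M then c (1 + (τ ⟨r - 1, h.2⟩ : ℕ)) else c r)
      = (Equiv.Perm.sign τ : ℤ) • f c := by
  rcases M with _ | M
  · rintro c ⟨s, h1, h2, _⟩; omega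
  have hτ : τ ∈ Submonoid.closure (Set.range fun i : Fin M ↦ Equiv.swap i.castSucc i.succ) := by
    rw [Equiv.Perm.mclosure_swap_castSucc_succ]; trivial
  induction hτ using Submonoid.closure_induction with
  | mem x hx =>
    obtain ⟨i, rfl⟩ := hx
    intro c hc
    have := hf c hc (i + 1) (by omega) (by omega)
    rw [Equiv.Perm.sign_swap (by simp [Fin.ext_iff])]
    simp only [Units.val_neg, Units.val_one, neg_smul, one_smul]
    rw [← this]
    congr 1
    funext r
    by_cases h : 1 ≤ r ∧ r - 1 < M + 1
    · simp only [h, and_self, dite_true]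
      congr 1
      simp only [Equiv.swap_apply_def, Fin.ext_iff]
      split_ifs <;> simp_all <;> omega
    · simp only [h, dite_false]
      congr 1
      simp only [Equiv.swap_apply_def]
      split_ifs <;> omega
  | one =>
    intro c hc
    simp only [Equiv.Perm.sign_one, Units.val_one, one_smul]
    congr 1
    funext r
    split_ifs with h
    · simp; congr 1; omega
    · rfl
  | mul x y _ _ hx hy =>
    intro c hc
    have h1 := hx c hc
    have h2 := hy (fun r => if h : 1 ≤ r ∧ r - 1 < M + 1 then c (1 + (x ⟨r - 1, h.2⟩ : ℕ)) else c r) (by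
      obtain ⟨s, a1, a2, a3⟩ := hc
      refine ⟨1 + (x.symm ⟨s - 1, by omega⟩ : ℕ), by omega, by omega, ?_⟩
      have : (1 + (x.symm ⟨s - 1, by omega⟩ : ℕ)) - 1 < M + 1 := by omega
      rw [dif_pos ⟨by omega, this⟩, dif_neg (by omega)]
      simp only [add_tsub_cancel_left, Fin.eta, Equiv.apply_symm_apply]
      rw [← a3]; congr 1; omega)
    rw [h1] at h2
    rw [Equiv.Perm.sign_mul, mul_comm, Units.val_mul, mul_smul, ← h2]
    congr 1
    funext r
    by_cases h : 1 ≤ r ∧ r - 1 < M + 1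
    · have h' : 1 ≤ 1 + (y ⟨r - 1, h.2⟩ : ℕ) ∧ 1 + (y ⟨r - 1, h.2⟩ : ℕ) - 1 < M + 1 := by omega
      rw [dif_pos h, dif_pos h, dif_pos h']
      simp
    · rw [dif_neg h, dif_neg h, dif_neg h]

theorem aux_lin {K : Type*} [Field K] {N : ℕ} (p : MvPolynomial (Fin N) K) (hp : p.IsHomogeneous 1) (a : Fin N) :
    pderiv a p = C (eval (Pi.single a 1) p) := by
  have : p ∈ Submodule.span K (Set.range (X : Fin N → MvPolynomial (Fin N) K)) := by
    rw [← MvPolynomial.homogeneousSubmodule_one_eq_span_X]; exact hp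
  clear hp
  induction this using Submodule.span_induction with
  | mem x h => 
    obtain ⟨i, rfl⟩ := h
    simp [pderiv_X, Pi.single_apply]
  | zero => simp
  | add x y _ _ h1 h2 => simp [h1, h2]
  | smul k x _ h => simp [h, MvPolynomial.smul_eq_C_mul]

/-- entrywise partial derivative of a matrix -/
noncomputable def pdMat {K : Type*} [Field K] {N x y : ℕ} (a : Fin N)
    (A : Matrix (Fin x) (Fin y) (MvPolynomial (Fin N) K)) : Matrix (Fin x) (Fin y) (MvPolynomial (Fin N) K) :=
  fun p q => pderiv a (A p q)

theorem pdMat_apply {K : Type*} [Field K] {N x y : ℕ} (a : Fin N)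
    (A : Matrix (Fin x) (Fin y) (MvPolynomial (Fin N) K)) (p q) : pdMat a A p q = pderiv a (A p q) := rfl

theorem bv_succ {K : Type*} [Field K] {N : ℕ} {b : ℕ → ℕ}
    (φ : ∀ r : ℕ, Matrix (Fin (b r)) (Fin (b (r + 1))) (MvPolynomial (Fin N) K))
    (P : Fin N → Fin N → Fin (b 1) → K) (c : ℕ → Fin N) (r : ℕ) :
    braceVec φ P c (r + 1) = Matrix.vecMul (braceVec φ P c r) (pdMat (c (r + 2)) (φ (r + 1))) := rfl

theorem bv_one {K : Type*} [Field K] {N : ℕ} {b : ℕ → ℕ}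
    (φ : ∀ r : ℕ, Matrix (Fin (b r)) (Fin (b (r + 1))) (MvPolynomial (Fin N) K))
    (P : Fin N → Fin N → Fin (b 1) → K) (c : ℕ → Fin N) :
    braceVec φ P c 1 = Matrix.vecMul (fun q => C (P (c 0) (c 1) q)) (pdMat (c 2) (φ 1)) := rfl

theorem aux_quad {K : Type*} [Field K] {N : ℕ} (P : Fin N → Fin N → K) (hs : ∀ i j, P i j = P j i)
   (p : MvPolynomial (Fin N) K) (hp : p = ∑ i, ∑ j, if i ≤ j then C (P i j) * X i * X j else 0) :
   (∀ i, eval (Pi.single i 1) p = P i i) ∧ 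
   (∀ i j, i ≠ j → eval (Pi.single i 1) (pderiv j p) = P i j) ∧
   (∀ i j, i ≠ j → pderiv i (pderiv j p) = C (P i j)) := by
  subst hp
  have h1 : ∀ j, pderiv j (∑ a, ∑ b, if a ≤ b then C (P a b) * X a * X b else 0) =
      (∑ b, if j ≤ b then C (P j b) * X b else 0) + (∑ a, if a ≤ j then C (P a j) * X a else 0) := by
    intro j
    have : ∀ a b, pderiv j (if a ≤ b then C (P a b) * X a * X b else 0) =
       (if j = a then (if a ≤ b then C (P a b) * X b else 0) else 0) +
       (if j = b then (if a ≤ b then C (P a b) * X a else 0) else 0) := by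
      intro a b
      by_cases h : a ≤ b
      · simp only [h, if_true, Derivation.leibniz, pderiv_X, pderiv_C, Pi.single_apply, smul_eq_mul]
        by_cases h1 : a = j <;> by_cases h2 : b = j <;> simp [h1, h2, eq_comm] <;> grind
      · simp [h]
    simp only [map_sum, this, Finset.sum_add_distrib]
    congr 1
    · rw [Finset.sum_comm]; simp
    · simp
  refine ⟨?_, ?_, ?_⟩
  · intro i
    have : ∀ a b, eval (Pi.single i 1) (if a ≤ b then C (P a b) * X a * X b else 0) =
       if i = a then (if i = b then P i i else 0) else 0 := by
      intro a b
      by_cases h1 : i = a <;> by_cases h2 : i = b <;> by_cases h : a ≤ b <;> simp [Pi.single_apply, h, h1, h2, eq_comm] <;> grind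
    simp [map_sum, this]
  · intro i j h
    rw [h1]
    simp only [map_add, map_sum, apply_ite (eval _), map_mul, eval_C, eval_X, map_zero, Pi.single_apply, mul_ite, mul_one, mul_zero]
    have e1 : ∀ (p : Fin N → Prop) [DecidablePred p] (f : Fin N → K), (∑ x, if p x then (if x = i then f x else 0) else 0) = if p i then f i else 0 := by
      intro p _ f
      rw [Finset.sum_eq_single i] <;> simp +contextual
    rw [e1, e1]
    rcases lt_or_gt_of_ne h with h | h
    · simp [h.le, not_le.2 h]
    · simp [h.le, not_le.2 h, hs i j]
  · intro i j h
    rw [h1]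
    simp only [map_add, map_sum, apply_ite (pderiv i), pderiv_C_mul, map_zero, pderiv_X, Pi.single_apply, mul_ite, mul_one, mul_zero]
    have e1 : ∀ (p : Fin N → Prop) [DecidablePred p] (f : Fin N → MvPolynomial (Fin N) K), (∑ x, if p x then (if x = i then f x else 0) else 0) = if p i then f i else 0 := by
      intro p _ f
      rw [Finset.sum_eq_single i] <;> simp +contextual
    rw [e1, e1]
    rcases lt_or_gt_of_ne h with h | h
    · simp [h.le, not_le.2 h]
    · simp [h.le, not_le.2 h, hs i j]

theorem aux_mid {K : Type*} [Field K] {N : ℕ} {x y z : ℕ}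
    (A : Matrix (Fin x) (Fin y) (MvPolynomial (Fin N) K)) (B : Matrix (Fin y) (Fin z) (MvPolynomial (Fin N) K))
    (hA : ∀ p q, (A p q).IsHomogeneous 1) (hB : ∀ p q, (B p q).IsHomogeneous 1) (h : A * B = 0) (i j : Fin N) :
    (pdMat i A * pdMat i B = 0) ∧
    (pdMat i A * pdMat j B +
    pdMat j A * pdMat i B = 0) := by
  have h0 : ∀ p q, ∑ k, A p k * B k q = 0 := fun p q => by
    simpa [Matrix.mul_apply] using congrFun (congrFun h p) q
  constructor
  · ext1 p q
    simp only [Matrix.mul_apply, Matrix.zero_apply, pdMat_apply, aux_lin _ (hA _ _), aux_lin _ (hB _ _), ← C_mul, ← map_sum, ← map_mul]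
    rw [h0]; simp
  · ext1 p q
    have := congrArg (fun t => C (σ := Fin N) (eval (Pi.single i 1) (pderiv j t))) (h0 p q)
    simp only [map_sum, Derivation.leibniz, smul_eq_mul, aux_lin _ (hA _ _), aux_lin _ (hB _ _), map_add, map_mul, eval_C, map_zero] at this
    simp only [Matrix.add_apply, Matrix.mul_apply, Matrix.zero_apply, pdMat_apply, aux_lin _ (hA _ _), aux_lin _ (hB _ _)]
    rw [← this, Finset.sum_add_distrib]
    congr 1
    exact Finset.sum_congr rfl fun _ _ => mul_comm _ _

theorem aux_fst {K : Type*} [Field K] {N : ℕ} {x y z : ℕ} (hx : x = 1) (P : Fin N → Fin N → Fin y → K)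
    (hs : ∀ i j, P i j = P j i)
    (A : Matrix (Fin x) (Fin y) (MvPolynomial (Fin N) K)) (B : Matrix (Fin y) (Fin z) (MvPolynomial (Fin N) K))
    (hA : ∀ p q, A p q = ∑ i, ∑ j, if i ≤ j then C (P i j q) * X i * X j else 0)
    (hB : ∀ p q, (B p q).IsHomogeneous 1) (h : A * B = 0) :
    (∀ i j, Matrix.vecMul (fun q => C (P i i q)) (pdMat j B) + 
      Matrix.vecMul (fun q => C (P i j q)) (pdMat i B) = (0 : Fin z → MvPolynomial (Fin N) K)) ∧ 
    (∀ i j k, i ≠ j → i ≠ k → j ≠ k → Matrix.vecMul (fun q => C (P i j q)) (pdMat k B) + 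
      Matrix.vecMul (fun q => C (P i k q)) (pdMat j B) + 
      Matrix.vecMul (fun q => C (P j k q)) (pdMat i B) = (0 : Fin z → MvPolynomial (Fin N) K)) := by
  subst hx
  have h0 : ∀ q, ∑ k, A 0 k * B k q = 0 := fun q => by
    simpa [Matrix.mul_apply] using congrFun (congrFun h 0) q
  have hq := fun q => aux_quad (fun i j => P i j q) (fun i j => congrFun (hs i j) q) (A 0 q) (hA 0 q)
  constructor
  · intro i j
    ext1 q
    by_cases hij : i = j
    · subst hij
      have := congrArg (fun t => C (σ := Fin N) (eval (Pi.single i 1) t)) (h0 q)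
      simp only [map_sum, map_mul, (hq _).1, map_zero] at this
      simp only [Pi.add_apply, Matrix.vecMul, dotProduct, Pi.zero_apply, pdMat_apply, aux_lin _ (hB _ _)]
      rw [this, add_zero]
    · have := congrArg (fun t => C (σ := Fin N) (eval (Pi.single i 1) (pderiv j t))) (h0 q)
      simp only [map_sum, map_mul, map_add, Derivation.leibniz, smul_eq_mul, (hq _).1, (hq _).2.1 i j hij, map_zero, aux_lin _ (hB _ _), eval_C] at this
      simp only [Pi.add_apply, Matrix.vecMul, dotProduct, Pi.zero_apply, pdMat_apply, aux_lin _ (hB _ _)]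
      rw [← this, Finset.sum_add_distrib]
      congr 1
      exact Finset.sum_congr rfl fun _ _ => mul_comm _ _
  · intro i j k hij hik hjk
    ext1 q
    have := congrArg (fun t => C (σ := Fin N) (eval (Pi.single i 1) (pderiv j (pderiv k t)))) (h0 q)
    simp only [map_sum, map_mul, map_add, Derivation.leibniz, smul_eq_mul, (hq _).1, (hq _).2.1 i j hij, (hq _).2.1 i k hik, (hq _).2.2 j k hjk, map_zero, aux_lin _ (hB _ _), eval_C, pderiv_C, mul_zero, zero_add] at this
    simp only [Pi.add_apply, Matrix.vecMul, dotProduct, Pi.zero_apply, pdMat_apply, aux_lin _ (hB _ _)]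
    rw [← this, ← Finset.sum_add_distrib, ← Finset.sum_add_distrib]
    exact Finset.sum_congr rfl fun _ _ => by ring

theorem bv_congr {K : Type*} [Field K] {N : ℕ} {b : ℕ → ℕ}
    (φ : ∀ r : ℕ, Matrix (Fin (b r)) (Fin (b (r + 1))) (MvPolynomial (Fin N) K))
    (P : Fin N → Fin N → Fin (b 1) → K) (c d : ℕ → Fin N) : ∀ r, (∀ s, s ≤ r + 1 → c s = d s) →
    braceVec φ P c r = braceVec φ P d r
  | 0, h => by simp only [braceVec]; rw [h 0 (by omega), h 1 (by omega)]
  | r + 1, h => by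
    simp only [braceVec]
    rw [bv_congr φ P c d r (fun s hs => h s (by omega)), h (r + 2) (by omega)]

theorem bv_prop {K : Type*} [Field K] {N : ℕ} {b : ℕ → ℕ}
    (φ : ∀ r : ℕ, Matrix (Fin (b r)) (Fin (b (r + 1))) (MvPolynomial (Fin N) K))
    (P : Fin N → Fin N → Fin (b 1) → K) (c d e : ℕ → Fin N) (u v : MvPolynomial (Fin N) K) (r₀ : ℕ)
    (hcd : ∀ s, r₀ + 2 ≤ s → c s = d s) (hce : ∀ s, r₀ + 2 ≤ s → c s = e s)
    (h : braceVec φ P c r₀ + u • braceVec φ P d r₀ + v • braceVec φ P e r₀ = 0) (r : ℕ) (hr : r₀ ≤ r) :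
    braceVec φ P c r + u • braceVec φ P d r + v • braceVec φ P e r = 0 := by
  induction r, hr using Nat.le_induction with
  | base => exact h
  | succ r hr ih =>
    rw [bv_succ, bv_succ, bv_succ]
    rw [← hcd (r + 2) (by omega), ← hce (r + 2) (by omega), ← Matrix.smul_vecMul, ← Matrix.smul_vecMul,
      ← Matrix.add_vecMul, ← Matrix.add_vecMul, ih, Matrix.zero_vecMul]

theorem bv_swap {K : Type*} [Field K] {N : ℕ} {b : ℕ → ℕ} (m : ℕ)
    (φ : ∀ r : ℕ, Matrix (Fin (b r)) (Fin (b (r + 1))) (MvPolynomial (Fin N) K))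
    (hcomp : ∀ r, r + 2 ≤ m → φ r * φ (r + 1) = 0)
    (hdegmid : ∀ r, 1 ≤ r → r + 2 ≤ m → ∀ p q, (φ r p q).IsHomogeneous 1)
    (P : Fin N → Fin N → Fin (b 1) → K) (c : ℕ → Fin N) (s r : ℕ) (hs : 2 ≤ s) (hsr : s ≤ r) (hr : r + 2 ≤ m) :
    braceVec φ P (fun t => c (Equiv.swap s (s+1) t)) r = - braceVec φ P c r ∧
    (c s = c (s + 1) → braceVec φ P c r = 0) := by
  obtain ⟨k, rfl⟩ : ∃ k, s = k + 2 := ⟨s - 2, by omega⟩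
  have hm := aux_mid (φ (k + 1)) (φ (k + 1 + 1)) (hdegmid _ (by omega) (by omega))
    (hdegmid _ (by omega) (by omega)) (hcomp _ (by omega))
  have e : braceVec φ P (fun t => c (Equiv.swap (k+2) (k+2+1) t)) k = braceVec φ P c k := by
    apply bv_congr
    intro s hs
    rw [Equiv.swap_apply_of_ne_of_ne] <;> omega
  constructor
  · have := bv_prop φ P c (fun t => c (Equiv.swap (k+2) (k+2+1) t)) c 1 0 (k + 2)
      (by intro s hs; rw [Equiv.swap_apply_of_ne_of_ne] <;> omega) (by simp) (by
        rw [zero_smul, add_zero, one_smul]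
        rw [bv_succ, bv_succ, bv_succ, bv_succ, e]
        simp only [Equiv.swap_apply_left, Equiv.swap_apply_right, Matrix.vecMul_vecMul]
        rw [← Matrix.vecMul_add, (hm _ _).2, Matrix.vecMul_zero]) r hsr
    rw [zero_smul, add_zero, one_smul] at this
    exact (neg_eq_of_add_eq_zero_right this).symm
  · intro h
    have := bv_prop φ P c c c 0 0 (k + 2)
      (by simp) (by simp) (by
        rw [zero_smul, add_zero, add_zero]
        rw [bv_succ, bv_succ]
        rw [h, Matrix.vecMul_vecMul, (hm _ (c 0)).1, Matrix.vecMul_zero]) r hsr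
    simpa using this

theorem bv_zero {K : Type*} [Field K] {N : ℕ} {b : ℕ → ℕ} (m : ℕ)
    (φ : ∀ r : ℕ, Matrix (Fin (b r)) (Fin (b (r + 1))) (MvPolynomial (Fin N) K))
    (hcomp : ∀ r, r + 2 ≤ m → φ r * φ (r + 1) = 0)
    (hdegmid : ∀ r, 1 ≤ r → r + 2 ≤ m → ∀ p q, (φ r p q).IsHomogeneous 1)
    (P : Fin N → Fin N → Fin (b 1) → K) (s r d : ℕ) (hs : 2 ≤ s) (hsr : s + d ≤ r) (hr : r + 2 ≤ m)
    (c : ℕ → Fin N) (h : c s = c (s + d + 1)) :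
    braceVec φ P c r = 0 := by
  induction d generalizing c with
  | zero => exact (bv_swap m φ hcomp hdegmid P c s r hs (by omega) hr).2 h
  | succ d ih =>
    have h1 := (bv_swap m φ hcomp hdegmid P c (s + d + 1) r (by omega) (by omega) hr).1
    rw [← neg_eq_zero, ← h1]
    apply ih (by omega)
    rw [Equiv.swap_apply_left, Equiv.swap_apply_of_ne_of_ne (by omega) (by omega), h]
    rfl

theorem bv_first {K : Type*} [Field K] {N : ℕ} {b : ℕ → ℕ} (m : ℕ) (hb0 : b 0 = 1)
    (φ : ∀ r : ℕ, Matrix (Fin (b r)) (Fin (b (r + 1))) (MvPolynomial (Fin N) K))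
    (hcomp : ∀ r, r + 2 ≤ m → φ r * φ (r + 1) = 0)
    (hdegmid : ∀ r, 1 ≤ r → r + 2 ≤ m → ∀ p q, (φ r p q).IsHomogeneous 1)
    (P : Fin N → Fin N → Fin (b 1) → K) (hPsymm : ∀ i j, P i j = P j i)
    (hP : ∀ (p : Fin (b 0)) (q : Fin (b 1)),
      φ 0 p q = ∑ i : Fin N, ∑ j : Fin N, if i ≤ j then C (P i j q) * X i * X j else 0)
    (c : ℕ → Fin N) (r : ℕ) (hr1 : 1 ≤ r) (hr : r + 2 ≤ m)
    (hi : ∃ s, 1 ≤ s ∧ s ≤ r + 1 ∧ c s = c 0) :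
    braceVec φ P (fun t => c (Equiv.swap 1 2 t)) r = - braceVec φ P c r := by
  obtain ⟨hf1, hf2⟩ := aux_fst hb0 P hPsymm (φ 0) (φ 1) hP (hdegmid 1 le_rfl (by omega)) (hcomp 0 (by omega))
  have sw0 : Equiv.swap 1 2 0 = 0 := by decide
  by_cases hc : c 1 = c 0 ∨ c 2 = c 0
  · have := bv_prop φ P c (fun t => c (Equiv.swap 1 2 t)) c 1 0 1
      (by intro s hs; rw [Equiv.swap_apply_of_ne_of_ne] <;> omega) (by simp) (by
        rw [zero_smul, add_zero, one_smul]
        simp only [bv_one, sw0, Equiv.swap_apply_left, Equiv.swap_apply_right]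
        rcases hc with hc | hc
        · rw [hc]; exact hf1 _ _
        · rw [hc]; exact (add_comm _ _).trans (hf1 _ _)) r hr1
    rw [zero_smul, add_zero, one_smul] at this
    exact (neg_eq_of_add_eq_zero_right this).symm
  push Not at hc
  obtain ⟨s, h1, h2, h3⟩ := hi
  have hs1 : s ≠ 1 := by rintro rfl; exact hc.1 h3
  have hs2 : s ≠ 2 := by rintro rfl; exact hc.2 h3
  -- the sequence (c 1, c 2, c 0, c 3, …)
  let d : ℕ → Fin N := fun t => if t = 0 then c 1 else if t = 1 then c 2 else if t = 2 then c 0 else c t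
  have hd : braceVec φ P d r = 0 := by
    apply bv_zero m φ hcomp hdegmid P 2 r (s - 3) le_rfl (by omega) hr
    have : 2 + (s - 3) + 1 = s := by omega
    rw [this]
    simp [d, hs1, hs2, h3]
    intro h; omega
  have hcd : ∀ s, 1 + 2 ≤ s → c s = d s := by
    intro s hs
    simp only [d]
    rw [if_neg (by omega), if_neg (by omega), if_neg (by omega)]
  by_cases h12 : c 1 = c 2
  · have := bv_prop φ P c d c 1 0 1 hcd (by simp) (by
        rw [zero_smul, add_zero, one_smul]
        simp only [bv_one, d]
        simp only [if_true, one_ne_zero, if_false, OfNat.ofNat_ne_zero, OfNat.ofNat_ne_one]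
        rw [← h12, hPsymm (c 0)]; exact (add_comm _ _).trans (hf1 _ _)) r hr1
    rw [hd] at this
    simp at this
    have e : (fun t => c (Equiv.swap 1 2 t)) = c := by
      funext t
      rw [Equiv.swap_apply_def]
      split_ifs <;> simp_all
    rw [e, this, neg_zero]
  · have := bv_prop φ P c (fun t => c (Equiv.swap 1 2 t)) d 1 1 1
      (by intro s hs; rw [Equiv.swap_apply_of_ne_of_ne] <;> omega) hcd (by
        rw [one_smul, one_smul]
        simp only [bv_one, sw0, Equiv.swap_apply_left, Equiv.swap_apply_right, d]
        simp only [if_true, one_ne_zero, if_false, OfNat.ofNat_ne_zero, OfNat.ofNat_ne_one]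
        exact hf2 _ _ _ (Ne.symm hc.1) (Ne.symm hc.2) h12) r hr1
    rw [hd, smul_zero, add_zero, one_smul] at this
    exact (neg_eq_of_add_eq_zero_right this).symm

theorem stmt12 (K : Type*) [Field K] (n : ℕ) (hn : 5 ≤ n) (m : ℕ) (hm : m = n - 2)
    (b : ℕ → ℕ) (hbpos : ∀ r, r ≤ m → 0 < b r) (hb0 : b 0 = 1) (hbm : b m = 1)
    (φ : ∀ r : ℕ, Matrix (Fin (b r)) (Fin (b (r + 1))) (MvPolynomial (Fin (n - 1)) K))
    (hcomp : ∀ r, r + 2 ≤ m → φ r * φ (r + 1) = 0)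
    (hdeg1 : ∀ p q, (φ 0 p q).IsHomogeneous 2)
    (hdegm : ∀ p q, (φ (m - 1) p q).IsHomogeneous 2)
    (hdegmid : ∀ r, 1 ≤ r → r + 2 ≤ m → ∀ p q, (φ r p q).IsHomogeneous 1)
    (P : Fin (n - 1) → Fin (n - 1) → Fin (b 1) → K)
    (Q : Fin (n - 1) → Fin (n - 1) → Fin (b (m - 1)) → K)
    (hPsymm : ∀ i j, P i j = P j i) (hQsymm : ∀ i j, Q i j = Q j i)
    (hP : ∀ (p : Fin (b 0)) (q : Fin (b 1)),
      φ 0 p q = ∑ i : Fin (n - 1), ∑ j : Fin (n - 1),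
        if i ≤ j then C (P i j q) * X i * X j else 0)
    (hQ : ∀ (p : Fin (b (m - 1))) (q : Fin (b (m - 1 + 1))),
      φ (m - 1) p q = ∑ i : Fin (n - 1), ∑ j : Fin (n - 1),
        if i ≤ j then C (Q i j p) * X i * X j else 0)
    (c : ℕ → Fin (n - 1)) (hi : ∃ s, 1 ≤ s ∧ s ≤ n - 3 ∧ c s = c 0)
    (τ : Equiv.Perm (Fin (n - 3))) :
    braceFn φ P m Q (by omega) n
        (fun r => if h : 1 ≤ r ∧ r - 1 < n - 3 then c (1 + (τ ⟨r - 1, h.2⟩ : ℕ)) else c r)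
      = (Equiv.Perm.sign τ : ℤ) • braceFn φ P m Q (by omega) n c := by

  refine aux_perm (n - 3) (braceFn φ P m Q (by omega) n) ?_ τ c hi
  intro c hc s hs1 hs2
  unfold braceFn
  have h1 : braceVec φ P (fun t => c (Equiv.swap s (s+1) t)) (m - 2) = - braceVec φ P c (m - 2) := by
    by_cases h : s = 1
    · subst h
      refine bv_first m hb0 φ hcomp hdegmid P hPsymm hP c (m - 2) (by omega) (by omega) ?_
      obtain ⟨t, a, b, d⟩ := hc
      exact ⟨t, a, by omega, d⟩
    · exact (bv_swap m φ hcomp hdegmid P c s (m - 2) (by omega) (by omega) (by omega)).1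
  simp only []
  rw [h1, Equiv.swap_apply_of_ne_of_ne (by omega) (by omega), Equiv.swap_apply_of_ne_of_ne (by omega) (by omega)]
  simp [Finset.sum_neg_distrib]
end
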